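/- Fix integers 1 ≤ k < N and δ₁, δ₂ ∈ (0,1) with δ₁ + δ₂ ≤ 1. Assume additionally that (F_n) is the natural filtration of (X_n). Let Ẑ := (1/k)·Σ_{m=1}^k X_m be the sample mean of the first k observations, set r₂ := 2·β·v^{1/p}·δ₂^{−1/p}·k^{−(p−1)/p}, λ := ( β·log(2/δ₁) / ( (N−k)·(β·𝔠_p + K_p·2^{p−1})·(v + r₂^p) ) )^{1/p}, and μ̂_N(k) := (1/(N−k))·Σ_{m=k+1}^N ( Trunc(λ(X_m − Ẑ))·(X_m − Ẑ) + Ẑ ). Then with probability at least 1 − δ₁ − δ₂: ‖μ̂_N(k) − μ‖ ≤ 2·( (β·𝔠_p + K_p·2^{p−1})·( v + 2^p·β^p·v/(δ₂·k^{p−1}) ) )^{1/p}·( β·log(2/δ₁)/(N−k) )^{(p−1)/p}. -/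

import Mathlib

open MeasureTheory
open scoped Classical

/-- `truncB x = min(1, ‖x‖)/‖x‖` for `x ≠ 0`, and `truncB 0 = 1`; so `truncB x • x` is the
projection of `x` onto the closed unit ball. -/
noncomputable def truncB {B : Type*} [NormedAddCommGroup B] (x : B) : ℝ :=
  if x = 0 then 1 else min 1 ‖x‖ / ‖x‖

/-- `K_p = (1/p) ((p-1)/p)^{p-1}`. -/
noncomputable def Kp (p : ℝ) : ℝ := (1 / p) * ((p - 1) / p) ^ (p - 1)

/-- `𝔠_p(ρ) = 2^{p+1} (e^{2ρ} - 2ρ - 1)/(2ρ)²`. -/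
noncomputable def frakC (p ρ : ℝ) : ℝ :=
  2 ^ (p + 1) * (Real.exp (2 * ρ) - 2 * ρ - 1) / (2 * ρ) ^ 2


/-! In a `(2, β)`-smooth space, adding a centred increment bounded by `M` with conditional second
moment at most `s` multiplies `E cosh ‖S‖` by at most `1 + β² (e^M - 1 - M) / M² · s`. The norm
need not be differentiable, so this comes from comparing second differences of `cosh ‖·‖` along a
segment with those of an exponential. Markov's inequality then gives an exponential tail for
martingales with bounded increments.

Observations rescaled by `λ` and projected onto the unit ball have norm at most `1`, so that after
centring they are bounded by `2` with conditional second moment at most `4 σ`, where `σ` is the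
conditional `p`-th moment before projection; the projection biases the conditional mean by at most
`K_p σ`. Independently of truncation, smoothness bounds the `p`-th moment of the error of the pilot
mean by `2 β^p v / k^(p-1)`, so outside an event of probability `δ₂` the pilot mean is within `r₂`
of `μ`. Centring there gives `σ ≤ λ^p 2^(p-1) (v + r₂^p)`, and the prescribed `λ` makes the
sum of the variance and bias terms equal to the confidence term `β log (2 / δ₁) / (N - k)`. -/

open Filter Topology Set

/-- The divided exponential remainder `(e^x - 1 - x) / x²`, which is increasing on `(0, ∞)` and
governs the growth of `E cosh ‖M‖` for a martingale `M` with increments bounded by `x`. At `x = 0`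
the value is `0`, not the limit `1/2`. -/
noncomputable def expQuot (x : ℝ) : ℝ := (Real.exp x - 1 - x) / x ^ 2

section Real

lemma sinh_le_mul_cosh {t : ℝ} (ht : 0 ≤ t) : Real.sinh t ≤ t * Real.cosh t := by
  have hderiv (x : ℝ) : HasDerivAt (fun t : ℝ => t * Real.cosh t - Real.sinh t)
      (x * Real.sinh x) x := by
    exact (((hasDerivAt_id x).mul (Real.hasDerivAt_cosh x)).sub
      (Real.hasDerivAt_sinh x)).congr_deriv (by simp)
  have hmono : MonotoneOn (fun t : ℝ => t * Real.cosh t - Real.sinh t) (Ici 0) := by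
    refine monotoneOn_of_hasDerivWithinAt_nonneg (convex_Ici 0)
      (fun x _ => (hderiv x).continuousAt.continuousWithinAt)
      (fun x _ => (hderiv x).hasDerivWithinAt) fun x hx => ?_
    have hx0 : 0 ≤ x := interior_subset hx
    exact mul_nonneg hx0 (Real.sinh_nonneg_iff.2 hx0)
  have h := hmono self_mem_Ici (mem_Ici.2 ht) ht
  simpa using h

lemma antitoneOn_cosh_mul_exp_neg_half_sq :
    AntitoneOn (fun t : ℝ => Real.cosh t * Real.exp (-(t ^ 2 / 2))) (Ici 0) := by
  have hderiv (x : ℝ) : HasDerivAt (fun t : ℝ => Real.cosh t * Real.exp (-(t ^ 2 / 2)))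
      ((Real.sinh x - x * Real.cosh x) * Real.exp (-(x ^ 2 / 2))) x := by
    have hsq : HasDerivAt (fun t : ℝ => -(t ^ 2 / 2)) (-x) x := by
      exact ((hasDerivAt_pow 2 x).div_const 2).neg.congr_deriv (by simp)
    exact ((Real.hasDerivAt_cosh x).mul hsq.exp).congr_deriv (by ring)
  refine antitoneOn_of_hasDerivWithinAt_nonpos (convex_Ici 0)
    (fun x _ => (hderiv x).continuousAt.continuousWithinAt)
    (fun x _ => (hderiv x).hasDerivWithinAt) fun x hx => ?_
  exact mul_nonpos_of_nonpos_of_nonneg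
    (sub_nonpos.2 (sinh_le_mul_cosh (interior_subset hx))) (Real.exp_nonneg _)

lemma cosh_le_cosh_mul_exp_half_sq_sub_sq {x m : ℝ} (hx : 0 ≤ x) (hxm : x ≤ m) :
    Real.cosh m ≤ Real.cosh x * Real.exp ((m ^ 2 - x ^ 2) / 2) := by
  have h : Real.cosh m * Real.exp (-(m ^ 2 / 2)) ≤ Real.cosh x * Real.exp (-(x ^ 2 / 2)) :=
    antitoneOn_cosh_mul_exp_neg_half_sq (mem_Ici.2 hx) (mem_Ici.2 (hx.trans hxm)) hxm
  calc Real.cosh m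
      = Real.cosh m * Real.exp (-(m ^ 2 / 2)) * Real.exp (m ^ 2 / 2) := by
        rw [mul_assoc, ← Real.exp_add, neg_add_cancel, Real.exp_zero, mul_one]
    _ ≤ Real.cosh x * Real.exp (-(x ^ 2 / 2)) * Real.exp (m ^ 2 / 2) := by gcongr
    _ = Real.cosh x * Real.exp ((m ^ 2 - x ^ 2) / 2) := by
        rw [mul_assoc, ← Real.exp_add]
        ring_nf

lemma cosh_mul_cosh_le {m q x y : ℝ} (hm : 0 ≤ m) (hx : 0 ≤ x)
    (hsum : m ^ 2 + q ^ 2 ≤ x ^ 2 + y ^ 2) (hqy : q ^ 2 ≤ y ^ 2) :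
    Real.cosh m * Real.cosh q ≤ Real.cosh x * Real.exp (y ^ 2 / 2) := by
  have hq := Real.cosh_le_exp_half_sq q
  rcases le_total x m with hxm | hmx
  · calc Real.cosh m * Real.cosh q
        ≤ Real.cosh x * Real.exp ((m ^ 2 - x ^ 2) / 2) * Real.exp (q ^ 2 / 2) :=
          mul_le_mul (cosh_le_cosh_mul_exp_half_sq_sub_sq hx hxm) hq
            (Real.cosh_pos _).le (by positivity)
      _ = Real.cosh x * Real.exp ((m ^ 2 - x ^ 2) / 2 + q ^ 2 / 2) := by
          rw [Real.exp_add, mul_assoc]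
      _ ≤ Real.cosh x * Real.exp (y ^ 2 / 2) := by
          gcongr
          linarith
  · have hcosh : Real.cosh m ≤ Real.cosh x :=
      Real.cosh_le_cosh.2 (by rwa [abs_of_nonneg hm, abs_of_nonneg hx])
    have hexp : Real.exp (q ^ 2 / 2) ≤ Real.exp (y ^ 2 / 2) := by gcongr
    exact mul_le_mul hcosh (hq.trans hexp) (Real.cosh_pos _).le (Real.cosh_pos _).le

lemma one_add_half_sq_le_cosh (y : ℝ) : 1 + y ^ 2 / 2 ≤ Real.cosh y := by
  wlog hy : 0 ≤ y generalizing y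
  · simpa using this (-y) (by linarith)
  have hsinh : (y / 2) ^ 2 ≤ Real.sinh (y / 2) ^ 2 :=
    pow_le_pow_left₀ (by positivity) (Real.self_le_sinh_iff.2 (by positivity)) 2
  have hcosh : Real.cosh y = 1 + 2 * Real.sinh (y / 2) ^ 2 := by
    have h := Real.cosh_two_mul (y / 2)
    rw [mul_div_cancel₀ y two_ne_zero, Real.cosh_sq] at h
    linarith
  rw [hcosh]
  linarith

lemma exp_sub_one_le_mul_exp (u : ℝ) : Real.exp u - 1 ≤ u * Real.exp u := by
  have h : Real.exp (-u) * Real.exp u = 1 := by rw [← Real.exp_add, neg_add_cancel, Real.exp_zero]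
  nlinarith [Real.one_sub_le_exp_neg u, Real.exp_pos u]

lemma exp_neg_le_quadratic {u : ℝ} (hu : 0 ≤ u) : Real.exp (-u) ≤ 1 - u + u ^ 2 / 2 := by
  have hquad : 1 ≤ (1 - u + u ^ 2 / 2) * (1 + u + u ^ 2 / 2) := by nlinarith [sq_nonneg (u ^ 2)]
  have hpos : 0 ≤ 1 - u + u ^ 2 / 2 := by nlinarith [sq_nonneg (u - 1)]
  rw [Real.exp_neg, inv_le_iff_one_le_mul₀ (Real.exp_pos u)]
  exact hquad.trans (mul_le_mul_of_nonneg_left (Real.quadratic_le_exp_of_nonneg hu) hpos)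

lemma hasSum_exp_sub_one_sub (x : ℝ) :
    HasSum (fun n : ℕ => x ^ (n + 2) / ((n + 2).factorial : ℝ)) (Real.exp x - 1 - x) := by
  have h := NormedSpace.expSeries_div_hasSum_exp x
  rw [← Real.exp_eq_exp_ℝ, ← hasSum_nat_add_iff' 2] at h
  simpa [Finset.sum_range_succ, sub_sub] using h

lemma exp_sub_one_sub_le_expQuot_mul_sq {u M : ℝ} (hu : 0 ≤ u) (huM : u ≤ M) :
    Real.exp u - 1 - u ≤ expQuot M * u ^ 2 := by
  rcases hu.eq_or_lt with rfl | hu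
  · simp
  have hM : 0 < M := hu.trans_le huM
  refine hasSum_le (fun n => ?_) (hasSum_exp_sub_one_sub u)
    (((hasSum_exp_sub_one_sub M).div_const (M ^ 2)).mul_right (u ^ 2))
  calc u ^ (n + 2) / ((n + 2).factorial : ℝ)
      ≤ M ^ n * u ^ 2 / ((n + 2).factorial : ℝ) := by
        rw [pow_add]
        gcongr
    _ = M ^ (n + 2) / ((n + 2).factorial : ℝ) / M ^ 2 * u ^ 2 := by
        field_simp
        rw [pow_add]

lemma expQuot_nonneg {x : ℝ} : 0 ≤ expQuot x :=
  div_nonneg (by linarith [Real.add_one_le_exp x]) (sq_nonneg x)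

lemma add_rpow_le_mul_rpow_add_rpow {p a b : ℝ} (hp : 1 ≤ p) (ha : 0 ≤ a) (hb : 0 ≤ b) :
    (a + b) ^ p ≤ 2 ^ (p - 1) * (a ^ p + b ^ p) := by
  lift a to NNReal using ha
  lift b to NNReal using hb
  exact_mod_cast NNReal.rpow_add_le_mul_rpow_add_rpow a b hp

lemma mul_sub_le_sub_of_midpoint_convex {f : ℝ → ℝ} {n : ℕ}
    (hf : ∀ j : ℕ, j < n → 2 * f j ≤ f (j - 1) + f (j + 1)) :
    n * (f 0 - f (-1)) ≤ f n - f 0 := by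
  have hincr : ∀ j ≤ n, f 0 - f (-1) ≤ f j - f (j - 1) := by
    intro j hj
    induction j with
    | zero => simp
    | succ j ih =>
      have := ih (by lia)
      have := hf j (by lia)
      push_cast
      rw [add_sub_cancel_right]
      linarith
  induction n with
  | zero => simp
  | succ n ih =>
    have := ih (fun j hj => hf j (by lia)) (fun j hj => hincr j (by lia))
    have := hincr (n + 1) le_rfl
    push_cast at this ⊢
    rw [add_sub_cancel_right] at this
    linarith

end Real

/-- `(2, β)`-smoothness of the norm of `B`: the one-sided parallelogram law that replaces
orthogonality of martingale increments outside Hilbert space. -/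
def IsTwoSmooth (B : Type*) [NormedAddCommGroup B] (β : ℝ) : Prop :=
  ∀ x y : B, ‖x + y‖ ^ 2 + ‖x - y‖ ^ 2 ≤ 2 * ‖x‖ ^ 2 + 2 * β ^ 2 * ‖y‖ ^ 2

section NormedSpace

variable {B : Type*} [NormedAddCommGroup B]

lemma cosh_norm_add_le_cosh_norm_mul_exp (x y : B) :
    Real.cosh ‖x + y‖ ≤ Real.cosh ‖x‖ * Real.exp ‖y‖ := by
  calc Real.cosh ‖x + y‖
      ≤ Real.cosh (‖x‖ + ‖y‖) := by
        rw [Real.cosh_le_cosh, abs_norm, abs_of_nonneg (by positivity)]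
        exact norm_add_le x y
    _ = Real.cosh ‖x‖ * Real.cosh ‖y‖ + Real.sinh ‖x‖ * Real.sinh ‖y‖ := Real.cosh_add _ _
    _ ≤ Real.cosh ‖x‖ * Real.cosh ‖y‖ + Real.cosh ‖x‖ * Real.sinh ‖y‖ := by
        have : 0 ≤ Real.sinh ‖y‖ := Real.sinh_nonneg_iff.2 (norm_nonneg y)
        gcongr
        exact (Real.sinh_lt_cosh _).le
    _ = Real.cosh ‖x‖ * Real.exp ‖y‖ := by rw [← mul_add, Real.cosh_add_sinh]

variable [NormedSpace ℝ B]

lemma convexOn_univ_comp_norm {g : ℝ → ℝ} (hg : ConvexOn ℝ (Ici 0) g)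
    (hmono : MonotoneOn g (Ici 0)) : ConvexOn ℝ univ (fun x : B => g ‖x‖) := by
  refine ⟨convex_univ, fun x _ y _ a b ha hb hab => ?_⟩
  have hnorm : ‖a • x + b • y‖ ≤ a • ‖x‖ + b • ‖y‖ :=
    (convexOn_univ_norm (E := B)).2 (mem_univ x) (mem_univ y) ha hb hab
  exact (hmono (mem_Ici.2 (norm_nonneg _)) (mem_Ici.2 ((norm_nonneg _).trans hnorm)) hnorm).trans
    (hg.2 (mem_Ici.2 (norm_nonneg x)) (mem_Ici.2 (norm_nonneg y)) ha hb hab)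

lemma convexOn_norm_rpow {p : ℝ} (hp : 1 ≤ p) : ConvexOn ℝ univ (fun x : B => ‖x‖ ^ p) :=
  convexOn_univ_comp_norm (convexOn_rpow hp)
    fun _ hx _ _ hxy => Real.rpow_le_rpow hx hxy (by linarith)

lemma convexOn_cosh_norm : ConvexOn ℝ univ (fun x : B => Real.cosh ‖x‖) := by
  refine convexOn_univ_comp_norm ?_ ?_
  · have hneg : ConvexOn ℝ (Ici (0 : ℝ)) fun x => Real.exp (-x) :=
      (convexOn_exp.comp_linearMap (-LinearMap.id)).subset (subset_univ _) (convex_Ici 0)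
    have hpos := convexOn_exp.subset (subset_univ _) (convex_Ici (0 : ℝ))
    refine ((hpos.add hneg).smul (c := 1 / 2) (by norm_num)).congr fun x _ => ?_
    simp only [Real.cosh_eq, Pi.add_apply, smul_eq_mul]
    ring
  · intro x hx y hy hxy
    exact Real.cosh_le_cosh.2 (by rwa [abs_of_nonneg hx, abs_of_nonneg hy])

end NormedSpace

namespace IsTwoSmooth

variable {B : Type*} [NormedAddCommGroup B] {β p : ℝ}

lemma norm_add_rpow_add_norm_sub_rpow_le (hB : IsTwoSmooth B β) (hβ : 0 ≤ β) (hp0 : 0 < p)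
    (hp2 : p ≤ 2) (x y : B) :
    ‖x + y‖ ^ p + ‖x - y‖ ^ p ≤ 2 * ‖x‖ ^ p + 2 * β ^ p * ‖y‖ ^ p := by
  have hsq_rpow {t : ℝ} (ht : 0 ≤ t) : (t ^ 2) ^ (p / 2) = t ^ p := by
    rw [← Real.rpow_natCast_mul ht, Nat.cast_ofNat, mul_div_cancel₀ p two_ne_zero]
  have hconcave := (Real.concaveOn_rpow (p := p / 2) (by linarith) (by linarith)).2
    (mem_Ici.2 (sq_nonneg ‖x + y‖)) (mem_Ici.2 (sq_nonneg ‖x - y‖))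
    (by norm_num : (0 : ℝ) ≤ 1 / 2) (by norm_num : (0 : ℝ) ≤ 1 / 2) (by norm_num)
  simp only [smul_eq_mul, hsq_rpow (norm_nonneg _)] at hconcave
  have hmean : (1 / 2 * ‖x + y‖ ^ 2 + 1 / 2 * ‖x - y‖ ^ 2) ^ (p / 2)
      ≤ ‖x‖ ^ p + β ^ p * ‖y‖ ^ p := by
    calc (1 / 2 * ‖x + y‖ ^ 2 + 1 / 2 * ‖x - y‖ ^ 2) ^ (p / 2)
        ≤ (‖x‖ ^ 2 + (β * ‖y‖) ^ 2) ^ (p / 2) := by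
          refine Real.rpow_le_rpow (by positivity) ?_ (by linarith)
          linarith [hB x y, mul_pow β ‖y‖ 2]
      _ ≤ (‖x‖ ^ 2) ^ (p / 2) + ((β * ‖y‖) ^ 2) ^ (p / 2) :=
          Real.rpow_add_le_add_rpow (by positivity) (by positivity) (by linarith) (by linarith)
      _ = ‖x‖ ^ p + β ^ p * ‖y‖ ^ p := by
          rw [hsq_rpow (norm_nonneg x), hsq_rpow (by positivity),
            Real.mul_rpow hβ (norm_nonneg y)]
  linarith

variable [NormedSpace ℝ B]

lemma cosh_norm_add_add_cosh_norm_sub_le (hB : IsTwoSmooth B β) (hβ : 1 ≤ β) (x y : B) :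
    Real.cosh ‖x + y‖ + Real.cosh ‖x - y‖
      ≤ 2 * Real.cosh ‖x‖ * Real.exp ((β * ‖y‖) ^ 2 / 2) := by
  set m := (‖x + y‖ + ‖x - y‖) / 2
  set q := (‖x + y‖ - ‖x - y‖) / 2 with hq
  have hsum : m ^ 2 + q ^ 2 ≤ ‖x‖ ^ 2 + (β * ‖y‖) ^ 2 := by
    linear_combination hB x y / 2
  have hqy : |q| ≤ ‖y‖ := by
    have h := abs_norm_sub_norm_le (x + y) (x - y)
    rw [show x + y - (x - y) = (2 : ℝ) • y by rw [two_smul]; abel, norm_smul,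
      Real.norm_ofNat] at h
    rw [hq, abs_div, abs_two]
    linarith
  have hqβ : q ^ 2 ≤ (β * ‖y‖) ^ 2 :=
    sq_le_sq.2 ((hqy.trans (le_mul_of_one_le_left (norm_nonneg y) hβ)).trans (le_abs_self _))
  calc Real.cosh ‖x + y‖ + Real.cosh ‖x - y‖
      = Real.cosh (m + q) + Real.cosh (m - q) := by
        rw [show m + q = ‖x + y‖ by ring, show m - q = ‖x - y‖ by ring]
    _ = 2 * (Real.cosh m * Real.cosh q) := by
        rw [Real.cosh_add, Real.cosh_sub]
        ring
    _ ≤ 2 * (Real.cosh ‖x‖ * Real.exp ((β * ‖y‖) ^ 2 / 2)) := by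
        gcongr ?_ * ?_
        exact cosh_mul_cosh_le (by positivity) (norm_nonneg x) hsum hqβ
    _ = 2 * Real.cosh ‖x‖ * Real.exp ((β * ‖y‖) ^ 2 / 2) := by ring

lemma cosh_norm_second_difference_le (hB : IsTwoSmooth B β) (hβ : 1 ≤ β) (x e : B) {t : ℝ}
    (ht : 0 ≤ t) :
    Real.cosh ‖x + (t - 1) • e‖ + Real.cosh ‖x + (t + 1) • e‖ - 2 * Real.cosh ‖x + t • e‖
      ≤ β ^ 2 * Real.exp ((β * ‖e‖) ^ 2 / 2) * Real.cosh ‖x‖ *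
        (Real.exp ((t - 1) * ‖e‖) + Real.exp ((t + 1) * ‖e‖) - 2 * Real.exp (t * ‖e‖)) := by
  set E := Real.exp ((β * ‖e‖) ^ 2 / 2)
  have hpair : Real.cosh ‖x + (t + 1) • e‖ + Real.cosh ‖x + (t - 1) • e‖
      ≤ 2 * Real.cosh ‖x + t • e‖ * E := by
    convert hB.cosh_norm_add_add_cosh_norm_sub_le hβ (x + t • e) e using 4
    all_goals module
  have hcosh : Real.cosh ‖x + t • e‖ ≤ Real.cosh ‖x‖ * Real.exp (t * ‖e‖) := by
    simpa [norm_smul, abs_of_nonneg ht] using cosh_norm_add_le_cosh_norm_mul_exp x (t • e)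
  have hexp : Real.exp (t * ‖e‖) * ‖e‖ ^ 2
      ≤ Real.exp ((t - 1) * ‖e‖) + Real.exp ((t + 1) * ‖e‖) - 2 * Real.exp (t * ‖e‖) := by
    have h := mul_le_mul_of_nonneg_left (one_add_half_sq_le_cosh ‖e‖) (Real.exp_nonneg (t * ‖e‖))
    rw [Real.cosh_eq] at h
    rw [show (t - 1) * ‖e‖ = t * ‖e‖ + -‖e‖ by ring, show (t + 1) * ‖e‖ = t * ‖e‖ + ‖e‖ by ring,
      Real.exp_add, Real.exp_add]
    linarith
  calc Real.cosh ‖x + (t - 1) • e‖ + Real.cosh ‖x + (t + 1) • e‖ - 2 * Real.cosh ‖x + t • e‖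
      ≤ 2 * (Real.cosh ‖x + t • e‖ * (E - 1)) := by linarith
    _ ≤ 2 * ((Real.cosh ‖x‖ * Real.exp (t * ‖e‖)) * ((β * ‖e‖) ^ 2 / 2 * E)) := by
        gcongr
        · exact sub_nonneg.2 (Real.one_le_exp (by positivity))
        · exact exp_sub_one_le_mul_exp _
    _ = β ^ 2 * E * Real.cosh ‖x‖ * (Real.exp (t * ‖e‖) * ‖e‖ ^ 2) := by ring
    _ ≤ _ := by gcongr

-- Along the points `x + t • e` the function `cosh ‖·‖` need not be differentiable, so its growth is
-- compared by second differences with that of a multiple of `t ↦ exp (t * ‖e‖)`.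
lemma cosh_norm_add_natCast_smul_le (hB : IsTwoSmooth B β) (hβ : 1 ≤ β) (x e : B) (n : ℕ) :
    Real.cosh ‖x + (n : ℝ) • e‖ ≤ Real.cosh ‖x‖ + n * (Real.cosh ‖x‖ - Real.cosh ‖x - e‖) +
      β ^ 2 * Real.exp ((β * ‖e‖) ^ 2 / 2) * Real.cosh ‖x‖ *
        (Real.exp (n * ‖e‖) - 1 - n * (1 - Real.exp (-‖e‖))) := by
  set C := β ^ 2 * Real.exp ((β * ‖e‖) ^ 2 / 2) * Real.cosh ‖x‖
  have h := mul_sub_le_sub_of_midpoint_convex (n := n)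
    (f := fun t => C * Real.exp (t * ‖e‖) - Real.cosh ‖x + t • e‖) fun j _ => by
      linarith [hB.cosh_norm_second_difference_le hβ x e j.cast_nonneg]
  simp only [zero_mul, Real.exp_zero, zero_smul, add_zero, neg_one_mul, neg_one_smul,
    ← sub_eq_add_neg] at h
  linarith

lemma cosh_norm_add_le (hB : IsTwoSmooth B β) (hβ : 1 ≤ β) (x d : B) {M : ℝ} (hd : ‖d‖ ≤ M)
    {n : ℕ} (hn : n ≠ 0) :
    Real.cosh ‖x + d‖ ≤
      Real.cosh ‖x‖ + n * (Real.cosh ‖x‖ - Real.cosh ‖x - (n : ℝ)⁻¹ • d‖) +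
        β ^ 2 * Real.exp ((β * (M / n)) ^ 2 / 2) * (expQuot M + 1 / (2 * n)) *
          (Real.cosh ‖x‖ * ‖d‖ ^ 2) := by
  have hn0 : (0 : ℝ) < n := by positivity
  have hnorm : ‖(n : ℝ)⁻¹ • d‖ = ‖d‖ / n := by
    rw [norm_smul, norm_inv, Real.norm_natCast, inv_mul_eq_div]
  have hexp : Real.exp ‖d‖ - 1 - n * (1 - Real.exp (-(‖d‖ / n)))
      ≤ (expQuot M + 1 / (2 * n)) * ‖d‖ ^ 2 := by
    have hneg := exp_neg_le_quadratic (div_nonneg (norm_nonneg d) hn0.le)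
    have hquot := exp_sub_one_sub_le_expQuot_mul_sq (norm_nonneg d) hd
    have hmul : n * (Real.exp (-(‖d‖ / n)) - 1) ≤ -‖d‖ + 1 / (2 * n) * ‖d‖ ^ 2 := by
      calc n * (Real.exp (-(‖d‖ / n)) - 1)
          ≤ n * (-(‖d‖ / n) + (‖d‖ / n) ^ 2 / 2) := by
            gcongr
            linarith
        _ = -‖d‖ + 1 / (2 * n) * ‖d‖ ^ 2 := by field_simp
    linarith
  calc Real.cosh ‖x + d‖
      ≤ Real.cosh ‖x‖ + n * (Real.cosh ‖x‖ - Real.cosh ‖x - (n : ℝ)⁻¹ • d‖) +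
        β ^ 2 * Real.exp ((β * (‖d‖ / n)) ^ 2 / 2) * Real.cosh ‖x‖ *
          (Real.exp ‖d‖ - 1 - n * (1 - Real.exp (-(‖d‖ / n)))) := by
        have h := hB.cosh_norm_add_natCast_smul_le hβ x ((n : ℝ)⁻¹ • d) n
        rwa [smul_inv_smul₀ hn0.ne', hnorm, mul_div_cancel₀ _ hn0.ne'] at h
    _ ≤ Real.cosh ‖x‖ + n * (Real.cosh ‖x‖ - Real.cosh ‖x - (n : ℝ)⁻¹ • d‖) +
        β ^ 2 * Real.exp ((β * (M / n)) ^ 2 / 2) * Real.cosh ‖x‖ *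
          ((expQuot M + 1 / (2 * n)) * ‖d‖ ^ 2) := by
        have := expQuot_nonneg (x := M)
        refine add_le_add_right (mul_le_mul_of_nonneg ?_ hexp (by positivity) (by positivity)) _
        gcongr
    _ = _ := by ring

end IsTwoSmooth

section CondExp

variable {Ω : Type*} {m mΩ : MeasurableSpace Ω} {P : Measure Ω}
  {B : Type*} [NormedAddCommGroup B] {S d Y : Ω → B} {β M R p s : ℝ}

lemma integrable_norm_rpow_iff_memLp (hp : 0 < p) (hY : AEStronglyMeasurable Y P) :
    Integrable (fun ω => ‖Y ω‖ ^ p) P ↔ MemLp Y (ENNReal.ofReal p) P := by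
  simpa only [ENNReal.toReal_ofReal hp.le] using
    integrable_norm_rpow_iff hY (ENNReal.ofReal_pos.2 hp).ne' ENNReal.ofReal_ne_top

lemma integrable_norm_rpow (hp : 0 < p) (hY : MemLp Y (ENNReal.ofReal p) P) :
    Integrable (fun ω => ‖Y ω‖ ^ p) P :=
  (integrable_norm_rpow_iff_memLp hp hY.1).2 hY

lemma norm_cosh_norm_le {x : B} (hx : ‖x‖ ≤ R) : ‖Real.cosh ‖x‖‖ ≤ Real.cosh R := by
  rw [Real.norm_of_nonneg (Real.cosh_pos _).le, Real.cosh_le_cosh, abs_norm]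
  exact hx.trans (le_abs_self R)

variable [IsFiniteMeasure P]

lemma integral_mul_le_of_condExp_le (hm : m ≤ mΩ) {f g : Ω → ℝ}
    (hf : StronglyMeasurable[m] f) (hf0 : ∀ ω, 0 ≤ f ω) (hfi : Integrable f P)
    (hg : Integrable g P) (hfg : Integrable (f * g) P) (hgs : ∀ᵐ ω ∂P, (P[g | m]) ω ≤ s) :
    ∫ ω, f ω * g ω ∂P ≤ s * ∫ ω, f ω ∂P := by
  calc ∫ ω, f ω * g ω ∂P
      = ∫ ω, (P[f * g | m]) ω ∂P := (integral_condExp hm).symm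
    _ ≤ ∫ ω, s * f ω ∂P := by
        refine integral_mono_ae integrable_condExp (hfi.const_mul s) ?_
        filter_upwards [condExp_mul_of_stronglyMeasurable_left hf hfg hg, hgs] with ω hω hs
        rw [hω, Pi.mul_apply, mul_comm s]
        exact mul_le_mul_of_nonneg_left hs (hf0 ω)
    _ = s * ∫ ω, f ω ∂P := integral_const_mul s f

lemma integrable_cosh_norm_of_bound (hY : AEStronglyMeasurable Y P)
    (hYR : ∀ᵐ ω ∂P, ‖Y ω‖ ≤ R) : Integrable (fun ω => Real.cosh ‖Y ω‖) P := by
  refine .of_bound (Real.continuous_cosh.comp_aestronglyMeasurable hY.norm) (Real.cosh R) ?_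
  filter_upwards [hYR] with ω hω using norm_cosh_norm_le hω

lemma integrable_norm_pow_of_bound (hY : AEStronglyMeasurable Y P)
    (hYR : ∀ᵐ ω ∂P, ‖Y ω‖ ≤ R) (n : ℕ) : Integrable (fun ω => ‖Y ω‖ ^ n) P := by
  refine .of_bound (hY.norm.pow n) (R ^ n) ?_
  filter_upwards [hYR] with ω hω
  rw [norm_pow, norm_norm]
  exact pow_le_pow_left₀ (norm_nonneg _) hω n

lemma integral_cosh_norm_mul_sq_le (hm : m ≤ mΩ) (hS : StronglyMeasurable[m] S)
    (hSR : ∀ᵐ ω ∂P, ‖S ω‖ ≤ R) (hd : AEStronglyMeasurable d P) (hdM : ∀ᵐ ω ∂P, ‖d ω‖ ≤ M)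
    (hds : ∀ᵐ ω ∂P, (P[fun ω' => ‖d ω'‖ ^ 2 | m]) ω ≤ s) :
    Integrable (fun ω => Real.cosh ‖S ω‖ * ‖d ω‖ ^ 2) P ∧
      ∫ ω, Real.cosh ‖S ω‖ * ‖d ω‖ ^ 2 ∂P ≤ s * ∫ ω, Real.cosh ‖S ω‖ ∂P := by
  have hiS := integrable_cosh_norm_of_bound (hS.mono hm).aestronglyMeasurable hSR
  have hid := integrable_norm_pow_of_bound hd hdM 2
  have hi : Integrable (fun ω => Real.cosh ‖S ω‖ * ‖d ω‖ ^ 2) P :=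
    hid.bdd_mul hiS.1 (c := Real.cosh R) <| by
      filter_upwards [hSR] with ω hω using norm_cosh_norm_le hω
  exact ⟨hi, integral_mul_le_of_condExp_le hm (Real.continuous_cosh.comp_stronglyMeasurable hS.norm)
    (fun ω => (Real.cosh_pos _).le) hiS hid hi hds⟩

variable [NormedSpace ℝ B] [CompleteSpace B]

lemma integral_le_integral_comp_sub_of_condExp_eq_zero (hm : m ≤ mΩ) {φ : B → ℝ}
    (hφ : ConvexOn ℝ univ φ) (hφc : Continuous φ) (hS : StronglyMeasurable[m] S)
    (hSi : Integrable S P) (hd : Integrable d P) (hd0 : P[d | m] =ᵐ[P] 0)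
    (hφS : Integrable (fun ω => φ (S ω)) P) (hφSd : Integrable (fun ω => φ (S ω - d ω)) P) :
    ∫ ω, φ (S ω) ∂P ≤ ∫ ω, φ (S ω - d ω) ∂P := by
  have hjensen := hφ.map_condExp_le_univ (μ := P) hm hφc.lowerSemicontinuous (hSi.sub hd) hφSd
  have hcond : P[S - d | m] =ᵐ[P] S := by
    filter_upwards [condExp_sub hSi hd m, hd0] with ω hsub hzero
    rw [hsub, Pi.sub_apply, hzero, condExp_of_stronglyMeasurable hm hS hSi, Pi.zero_apply, sub_zero]
  calc ∫ ω, φ (S ω) ∂P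
      ≤ ∫ ω, (P[φ ∘ (S - d) | m]) ω ∂P := by
        refine integral_mono_ae hφS integrable_condExp ?_
        filter_upwards [hjensen, hcond] with ω hω hS
        simpa [hS] using hω
    _ = ∫ ω, φ (S ω - d ω) ∂P := integral_condExp hm

lemma integral_cosh_norm_le_integral_cosh_norm_sub_smul (hm : m ≤ mΩ)
    (hS : StronglyMeasurable[m] S) (hSR : ∀ᵐ ω ∂P, ‖S ω‖ ≤ R)
    (hd : AEStronglyMeasurable d P) (hdM : ∀ᵐ ω ∂P, ‖d ω‖ ≤ M) (hd0 : P[d | m] =ᵐ[P] 0) (c : ℝ) :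
    Integrable (fun ω => Real.cosh ‖S ω - c • d ω‖) P ∧
      ∫ ω, Real.cosh ‖S ω‖ ∂P ≤ ∫ ω, Real.cosh ‖S ω - c • d ω‖ ∂P := by
  have hSm : AEStronglyMeasurable S P := (hS.mono hm).aestronglyMeasurable
  have hi : Integrable (fun ω => Real.cosh ‖S ω - c • d ω‖) P :=
    integrable_cosh_norm_of_bound (R := R + ‖c‖ * M) (hSm.sub (hd.const_smul c)) <| by
      filter_upwards [hSR, hdM] with ω hS hd
      exact norm_sub_le_of_le hS ((norm_smul_le c _).trans (by gcongr))
  refine ⟨hi, integral_le_integral_comp_sub_of_condExp_eq_zero hm convexOn_cosh_norm (by fun_prop)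
    hS (.of_bound hSm R hSR) ((Integrable.of_bound hd M hdM).smul c) ?_
    (integrable_cosh_norm_of_bound hSm hSR) hi⟩
  exact (condExp_smul c d m).trans (by filter_upwards [hd0] with ω hω; simp [hω])

namespace IsTwoSmooth

lemma integral_norm_add_rpow_le (hB : IsTwoSmooth B β) (hβ : 0 ≤ β) (hp1 : 1 ≤ p) (hp2 : p ≤ 2)
    (hm : m ≤ mΩ) (hS : StronglyMeasurable[m] S) (hSp : MemLp S (ENNReal.ofReal p) P)
    (hd : MemLp d (ENNReal.ofReal p) P) (hd0 : P[d | m] =ᵐ[P] 0) :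
    ∫ ω, ‖S ω + d ω‖ ^ p ∂P ≤ ∫ ω, ‖S ω‖ ^ p ∂P + 2 * β ^ p * ∫ ω, ‖d ω‖ ^ p ∂P := by
  have hp0 : 0 < p := by linarith
  have hp1' : 1 ≤ ENNReal.ofReal p := ENNReal.one_le_ofReal.2 hp1
  have hiS := integrable_norm_rpow hp0 hSp
  have hid := integrable_norm_rpow hp0 hd
  have hiadd : Integrable (fun ω => ‖S ω + d ω‖ ^ p) P := integrable_norm_rpow hp0 (hSp.add hd)
  have hisub : Integrable (fun ω => ‖S ω - d ω‖ ^ p) P := integrable_norm_rpow hp0 (hSp.sub hd)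
  have hjensen : ∫ ω, ‖S ω‖ ^ p ∂P ≤ ∫ ω, ‖S ω - d ω‖ ^ p ∂P :=
    integral_le_integral_comp_sub_of_condExp_eq_zero hm (convexOn_norm_rpow hp1)
      (continuous_norm.rpow_const fun _ => Or.inr hp0.le) hS (hSp.integrable hp1')
      (hd.integrable hp1') hd0 hiS hisub
  have hsmooth : ∫ ω, (‖S ω + d ω‖ ^ p + ‖S ω - d ω‖ ^ p) ∂P
      ≤ ∫ ω, (2 * ‖S ω‖ ^ p + 2 * β ^ p * ‖d ω‖ ^ p) ∂P :=
    integral_mono (hiadd.add hisub) ((hiS.const_mul 2).add (hid.const_mul (2 * β ^ p)))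
      fun ω => hB.norm_add_rpow_add_norm_sub_rpow_le hβ hp0 hp2 (S ω) (d ω)
  rw [integral_add hiadd hisub, integral_add (hiS.const_mul 2) (hid.const_mul (2 * β ^ p)),
    integral_const_mul, integral_const_mul] at hsmooth
  linarith

lemma integral_cosh_norm_add_le_of_ne_zero (hB : IsTwoSmooth B β) (hβ : 1 ≤ β) (hm : m ≤ mΩ)
    (hS : StronglyMeasurable[m] S) (hSR : ∀ᵐ ω ∂P, ‖S ω‖ ≤ R)
    (hd : AEStronglyMeasurable d P) (hdM : ∀ᵐ ω ∂P, ‖d ω‖ ≤ M) (hd0 : P[d | m] =ᵐ[P] 0)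
    (hds : ∀ᵐ ω ∂P, (P[fun ω' => ‖d ω'‖ ^ 2 | m]) ω ≤ s) {n : ℕ} (hn : n ≠ 0) :
    ∫ ω, Real.cosh ‖S ω + d ω‖ ∂P ≤
      (1 + β ^ 2 * Real.exp ((β * (M / n)) ^ 2 / 2) * (expQuot M + 1 / (2 * n)) * s) *
        ∫ ω, Real.cosh ‖S ω‖ ∂P := by
  have hiS := integrable_cosh_norm_of_bound (hS.mono hm).aestronglyMeasurable hSR
  have hiadd : Integrable (fun ω => Real.cosh ‖S ω + d ω‖) P :=
    integrable_cosh_norm_of_bound (R := R + M) ((hS.mono hm).aestronglyMeasurable.add hd) <| by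
      filter_upwards [hSR, hdM] with ω hS hd using norm_add_le_of_le hS hd
  obtain ⟨hisub, hjensen⟩ := integral_cosh_norm_le_integral_cosh_norm_sub_smul hm hS hSR hd hdM hd0
    (n : ℝ)⁻¹
  obtain ⟨himul, hvar⟩ := integral_cosh_norm_mul_sq_le hm hS hSR hd hdM hds
  set C := β ^ 2 * Real.exp ((β * (M / n)) ^ 2 / 2) * (expQuot M + 1 / (2 * n))
  have hC0 : 0 ≤ C := by
    have := expQuot_nonneg (x := M)
    positivity
  have hidiff : Integrable
      (fun ω => n * (Real.cosh ‖S ω‖ - Real.cosh ‖S ω - (n : ℝ)⁻¹ • d ω‖)) P :=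
    (hiS.sub hisub).const_mul (n : ℝ)
  have hisum : Integrable (fun ω => Real.cosh ‖S ω‖ +
      n * (Real.cosh ‖S ω‖ - Real.cosh ‖S ω - (n : ℝ)⁻¹ • d ω‖)) P := hiS.add hidiff
  have hpoint : ∫ ω, Real.cosh ‖S ω + d ω‖ ∂P ≤ ∫ ω, (Real.cosh ‖S ω‖ +
      n * (Real.cosh ‖S ω‖ - Real.cosh ‖S ω - (n : ℝ)⁻¹ • d ω‖) +
        C * (Real.cosh ‖S ω‖ * ‖d ω‖ ^ 2)) ∂P := by
    refine integral_mono_ae hiadd (hisum.add (himul.const_mul C)) ?_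
    filter_upwards [hdM] with ω hω using hB.cosh_norm_add_le hβ (S ω) (d ω) hω hn
  calc ∫ ω, Real.cosh ‖S ω + d ω‖ ∂P
      ≤ ∫ ω, Real.cosh ‖S ω‖ ∂P +
          n * (∫ ω, Real.cosh ‖S ω‖ ∂P - ∫ ω, Real.cosh ‖S ω - (n : ℝ)⁻¹ • d ω‖ ∂P) +
          C * ∫ ω, Real.cosh ‖S ω‖ * ‖d ω‖ ^ 2 ∂P := by
        refine hpoint.trans_eq ?_
        rw [integral_add hisum (himul.const_mul C), integral_add hiS hidiff,
          integral_const_mul, integral_const_mul, integral_sub hiS hisub]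
    _ ≤ ∫ ω, Real.cosh ‖S ω‖ ∂P + n * 0 + C * (s * ∫ ω, Real.cosh ‖S ω‖ ∂P) := by
        gcongr
        linarith
    _ = (1 + C * s) * ∫ ω, Real.cosh ‖S ω‖ ∂P := by ring

lemma integral_cosh_norm_add_le (hB : IsTwoSmooth B β) (hβ : 1 ≤ β) (hm : m ≤ mΩ)
    (hS : StronglyMeasurable[m] S) (hSR : ∀ᵐ ω ∂P, ‖S ω‖ ≤ R)
    (hd : AEStronglyMeasurable d P) (hdM : ∀ᵐ ω ∂P, ‖d ω‖ ≤ M) (hd0 : P[d | m] =ᵐ[P] 0)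
    (hds : ∀ᵐ ω ∂P, (P[fun ω' => ‖d ω'‖ ^ 2 | m]) ω ≤ s) :
    ∫ ω, Real.cosh ‖S ω + d ω‖ ∂P ≤
      (1 + β ^ 2 * expQuot M * s) * ∫ ω, Real.cosh ‖S ω‖ ∂P := by
  set I := ∫ ω, Real.cosh ‖S ω‖ ∂P
  have hcont : Continuous fun ε : ℝ =>
      (1 + β ^ 2 * Real.exp ((β * (M * ε)) ^ 2 / 2) * (expQuot M + ε / 2) * s) * I := by
    fun_prop
  have hlim := (hcont.tendsto 0).comp (tendsto_inv_atTop_nhds_zero_nat (𝕜 := ℝ))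
  simp only [mul_zero, ne_eq, OfNat.ofNat_ne_zero, not_false_eq_true, zero_pow, zero_div,
    Real.exp_zero, mul_one, add_zero] at hlim
  refine ge_of_tendsto hlim ((eventually_ne_atTop 0).mono fun n hn => ?_)
  have h := hB.integral_cosh_norm_add_le_of_ne_zero hβ hm hS hSR hd hdM hd0 hds hn
  rwa [div_eq_mul_inv M, one_div, mul_inv, inv_mul_eq_div] at h

end IsTwoSmooth

end CondExp

/-- `d 0, d 1, …` is a `B`-valued martingale difference sequence for `𝒢`, indexed so that `d i`
is revealed at time `i + 1` and is centred given `𝒢 i`. -/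
structure IsMartingaleDifference {Ω B : Type*} [NormedAddCommGroup B] [NormedSpace ℝ B]
    [CompleteSpace B] {mΩ : MeasurableSpace Ω} (d : ℕ → Ω → B) (𝒢 : Filtration ℕ mΩ)
    (P : Measure Ω) : Prop where
  stronglyMeasurable (i : ℕ) : StronglyMeasurable[𝒢 (i + 1)] (d i)
  condExp_eq_zero (i : ℕ) : P[d i | 𝒢 i] =ᵐ[P] 0

/-- The filtration `𝒢` observed from time `k` on, for which the first `k` observations, and hence
the pilot mean, are known at time `0`. -/
def shiftFiltration {Ω : Type*} {mΩ : MeasurableSpace Ω} (𝒢 : Filtration ℕ mΩ) (k : ℕ) :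
    Filtration ℕ mΩ where
  seq i := 𝒢 (k + i)
  mono' _ _ hij := 𝒢.mono (Nat.add_le_add_left hij k)
  le' i := 𝒢.le (k + i)

section MartingaleDifference

variable {Ω : Type*} {mΩ : MeasurableSpace Ω} {P : Measure Ω}
  {B : Type*} [NormedAddCommGroup B]

lemma measureReal_le_norm_le_integral_cosh [IsFiniteMeasure P] {Y : Ω → B}
    (hY : Integrable (fun ω => Real.cosh ‖Y ω‖) P) (t : ℝ) :
    P.real {ω | t ≤ ‖Y ω‖} ≤ 2 * Real.exp (-t) * ∫ ω, Real.cosh ‖Y ω‖ ∂P := by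
  have hsub : {ω | t ≤ ‖Y ω‖} ⊆ {ω | Real.exp t / 2 ≤ Real.cosh ‖Y ω‖} := fun ω hω => by
    have hexp : Real.exp t ≤ Real.exp ‖Y ω‖ := Real.exp_le_exp.2 hω
    rw [mem_ofPred_eq, Real.cosh_eq]
    linarith [Real.exp_pos (-‖Y ω‖)]
  have hmarkov := mul_meas_ge_le_integral_of_nonneg
    (ae_of_all P fun ω => (Real.cosh_pos ‖Y ω‖).le) hY (Real.exp t / 2)
  calc P.real {ω | t ≤ ‖Y ω‖}
      ≤ P.real {ω | Real.exp t / 2 ≤ Real.cosh ‖Y ω‖} := measureReal_mono hsub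
    _ = 2 * Real.exp (-t) * (Real.exp t / 2 * P.real {ω | Real.exp t / 2 ≤ Real.cosh ‖Y ω‖}) := by
        rw [Real.exp_neg]
        field_simp
    _ ≤ 2 * Real.exp (-t) * ∫ ω, Real.cosh ‖Y ω‖ ∂P := by gcongr

lemma ae_norm_sum_le_of_bound {d : ℕ → Ω → B} {M : ℝ} (hdM : ∀ i, ∀ᵐ ω ∂P, ‖d i ω‖ ≤ M) (n : ℕ) :
    ∀ᵐ ω ∂P, ‖∑ i ∈ Finset.range n, d i ω‖ ≤ n * M := by
  filter_upwards [ae_all_iff.2 hdM] with ω hω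
  simpa using norm_sum_le_of_le (Finset.range n) fun i _ => hω i

variable [NormedSpace ℝ B] [CompleteSpace B] {𝒢 : Filtration ℕ mΩ} {d : ℕ → Ω → B}
  {β M p s θ : ℝ}

namespace IsMartingaleDifference

lemma aestronglyMeasurable (hd : IsMartingaleDifference d 𝒢 P) (i : ℕ) :
    AEStronglyMeasurable (d i) P :=
  ((hd.stronglyMeasurable i).mono (𝒢.le _)).aestronglyMeasurable

lemma stronglyMeasurable_sum (hd : IsMartingaleDifference d 𝒢 P) (n : ℕ) :
    StronglyMeasurable[𝒢 n] (fun ω => ∑ i ∈ Finset.range n, d i ω) :=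
  Finset.stronglyMeasurable_fun_sum _ fun i hi =>
    (hd.stronglyMeasurable i).mono (𝒢.mono (Finset.mem_range.1 hi))

lemma const_smul (hd : IsMartingaleDifference d 𝒢 P) (c : ℝ) :
    IsMartingaleDifference (fun i => c • d i) 𝒢 P where
  stronglyMeasurable i := (hd.stronglyMeasurable i).const_smul c
  condExp_eq_zero i := (condExp_smul c (d i) (𝒢 i)).trans <| by
    filter_upwards [hd.condExp_eq_zero i] with ω hω
    rw [Pi.smul_apply, hω, Pi.zero_apply, smul_zero]

lemma shift (hd : IsMartingaleDifference d 𝒢 P) (k : ℕ) :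
    IsMartingaleDifference (fun i => d (k + i)) (shiftFiltration 𝒢 k) P :=
  ⟨fun i => hd.stronglyMeasurable (k + i), fun i => hd.condExp_eq_zero (k + i)⟩

end IsMartingaleDifference

lemma isMartingaleDifference_sub_const [IsFiniteMeasure P] {X : ℕ → Ω → B} {μ : B}
    (hX : ∀ i, StronglyMeasurable[𝒢 (i + 1)] (X i)) (hXi : ∀ i, Integrable (X i) P)
    (hXμ : ∀ i, P[X i | 𝒢 i] =ᵐ[P] fun _ => μ) :
    IsMartingaleDifference (fun i ω => X i ω - μ) 𝒢 P where
  stronglyMeasurable i := (hX i).sub stronglyMeasurable_const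
  condExp_eq_zero i := by
    filter_upwards [condExp_sub (hXi i) (integrable_const μ) (𝒢 i), hXμ i] with ω hsub hω
    refine hsub.trans ?_
    rw [Pi.sub_apply, hω, condExp_const (𝒢.le i), sub_self, Pi.zero_apply]

namespace IsTwoSmooth

theorem integral_norm_sum_rpow_le [IsFiniteMeasure P] (hB : IsTwoSmooth B β) (hβ : 0 ≤ β)
    (hp1 : 1 ≤ p) (hp2 : p ≤ 2) (hd : IsMartingaleDifference d 𝒢 P)
    (hdp : ∀ i, MemLp (d i) (ENNReal.ofReal p) P) (n : ℕ) :
    ∫ ω, ‖∑ i ∈ Finset.range n, d i ω‖ ^ p ∂P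
      ≤ 2 * β ^ p * ∑ i ∈ Finset.range n, ∫ ω, ‖d i ω‖ ^ p ∂P := by
  induction n with
  | zero => simp [Real.zero_rpow (by linarith : p ≠ 0)]
  | succ n ih =>
    simp only [Finset.sum_range_succ]
    have hstep := hB.integral_norm_add_rpow_le hβ hp1 hp2 (𝒢.le n) (hd.stronglyMeasurable_sum n)
      (memLp_finsetSum _ fun i _ => hdp i) (hdp n) (hd.condExp_eq_zero n)
    linarith

variable [IsProbabilityMeasure P]

theorem integral_cosh_norm_sum_le (hB : IsTwoSmooth B β) (hβ : 1 ≤ β) (hs : 0 ≤ s)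
    (hd : IsMartingaleDifference d 𝒢 P) (hdM : ∀ i, ∀ᵐ ω ∂P, ‖d i ω‖ ≤ M)
    (hds : ∀ i, ∀ᵐ ω ∂P, (P[fun ω' => ‖d i ω'‖ ^ 2 | 𝒢 i]) ω ≤ s) (n : ℕ) :
    ∫ ω, Real.cosh ‖∑ i ∈ Finset.range n, d i ω‖ ∂P ≤ (1 + β ^ 2 * expQuot M * s) ^ n := by
  have hquot := expQuot_nonneg (x := M)
  induction n with
  | zero => simp
  | succ n ih =>
    simp only [Finset.sum_range_succ]
    rw [pow_succ']
    exact (hB.integral_cosh_norm_add_le hβ (𝒢.le n) (hd.stronglyMeasurable_sum n)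
      (ae_norm_sum_le_of_bound hdM n) (hd.aestronglyMeasurable n) (hdM n)
      (hd.condExp_eq_zero n) (hds n)).trans (by gcongr)

theorem measureReal_le_norm_sum_le (hB : IsTwoSmooth B β) (hβ : 1 ≤ β) (hs : 0 ≤ s)
    (hd : IsMartingaleDifference d 𝒢 P) (hdM : ∀ i, ∀ᵐ ω ∂P, ‖d i ω‖ ≤ M)
    (hds : ∀ i, ∀ᵐ ω ∂P, (P[fun ω' => ‖d i ω'‖ ^ 2 | 𝒢 i]) ω ≤ s) (n : ℕ) (t : ℝ) :
    P.real {ω | t ≤ ‖∑ i ∈ Finset.range n, d i ω‖}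
      ≤ 2 * Real.exp (n * (β ^ 2 * expQuot M * s) - t) := by
  have hcosh : Integrable (fun ω => Real.cosh ‖∑ i ∈ Finset.range n, d i ω‖) P :=
    integrable_cosh_norm_of_bound
      ((hd.stronglyMeasurable_sum n).mono (𝒢.le n)).aestronglyMeasurable
      (ae_norm_sum_le_of_bound hdM n)
  have hquot := expQuot_nonneg (x := M)
  calc P.real {ω | t ≤ ‖∑ i ∈ Finset.range n, d i ω‖}
      ≤ 2 * Real.exp (-t) * ∫ ω, Real.cosh ‖∑ i ∈ Finset.range n, d i ω‖ ∂P :=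
        measureReal_le_norm_le_integral_cosh hcosh t
    _ ≤ 2 * Real.exp (-t) * (1 + β ^ 2 * expQuot M * s) ^ n := by
        gcongr
        exact hB.integral_cosh_norm_sum_le hβ hs hd hdM hds n
    _ ≤ 2 * Real.exp (-t) * Real.exp (β ^ 2 * expQuot M * s) ^ n := by
        gcongr
        rw [add_comm]
        exact Real.add_one_le_exp _
    _ = 2 * Real.exp (n * (β ^ 2 * expQuot M * s) - t) := by
        rw [← Real.exp_nat_mul, mul_assoc, ← Real.exp_add]
        ring_nf

theorem measureReal_le_norm_sum_le_of_scale (hB : IsTwoSmooth B β) (hβ : 1 ≤ β) (hs : 0 ≤ s)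
    (hd : IsMartingaleDifference d 𝒢 P) (hdM : ∀ i, ∀ᵐ ω ∂P, ‖d i ω‖ ≤ M)
    (hds : ∀ i, ∀ᵐ ω ∂P, (P[fun ω' => ‖d i ω'‖ ^ 2 | 𝒢 i]) ω ≤ s) (n : ℕ) (hθ : 0 < θ)
    {δ : ℝ} (hδ : 0 < δ) :
    P.real {ω | (Real.log (2 / δ) + n * (β ^ 2 * expQuot (θ * M) * (θ ^ 2 * s))) / θ
      ≤ ‖∑ i ∈ Finset.range n, d i ω‖} ≤ δ := by
  set L := Real.log (2 / δ) + n * (β ^ 2 * expQuot (θ * M) * (θ ^ 2 * s)) with hL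
  have hθM (i : ℕ) : ∀ᵐ ω ∂P, ‖(θ • d i) ω‖ ≤ θ * M := by
    filter_upwards [hdM i] with ω hω
    rw [Pi.smul_apply, norm_smul, Real.norm_of_nonneg hθ.le]
    gcongr
  have hθs (i : ℕ) : ∀ᵐ ω ∂P, (P[fun ω' => ‖(θ • d i) ω'‖ ^ 2 | 𝒢 i]) ω ≤ θ ^ 2 * s := by
    have hsq : (fun ω => ‖(θ • d i) ω‖ ^ 2) = θ ^ 2 • fun ω => ‖d i ω‖ ^ 2 := by
      ext ω
      simp [norm_smul, mul_pow]
    rw [hsq]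
    filter_upwards [condExp_smul (θ ^ 2) (fun ω => ‖d i ω‖ ^ 2) (𝒢 i), hds i] with ω hsmul hω
    rw [hsmul, Pi.smul_apply, smul_eq_mul]
    gcongr
  have htail := hB.measureReal_le_norm_sum_le hβ (by positivity) (hd.const_smul θ) hθM hθs n L
  have hset : {ω | L / θ ≤ ‖∑ i ∈ Finset.range n, d i ω‖}
      = {ω | L ≤ ‖∑ i ∈ Finset.range n, (θ • d i) ω‖} := by
    ext ω
    simp only [mem_ofPred_eq, Pi.smul_apply]
    rw [← Finset.smul_sum, norm_smul, Real.norm_of_nonneg hθ.le, div_le_iff₀' hθ]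
  rw [hset]
  refine htail.trans_eq ?_
  rw [hL, sub_add_cancel_right, Real.exp_neg, Real.exp_log (by positivity)]
  field_simp

end IsTwoSmooth

end MartingaleDifference

/-- The radial projection of `x` onto the closed unit ball; this is the truncation applied to the
observations. -/
noncomputable def unitBallProj {B : Type*} [NormedAddCommGroup B] [NormedSpace ℝ B] (x : B) : B :=
  truncB x • x

section Truncation

variable {B : Type*} [NormedAddCommGroup B] {p : ℝ}

lemma Kp_nonneg (hp : 1 ≤ p) : 0 ≤ Kp p := by
  have : 0 ≤ (p - 1) / p := div_nonneg (by linarith) (by linarith)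
  unfold Kp
  positivity

-- `Kp p * t ^ p` is the multiple of `t ^ p` tangent to `t - 1`, at `t = p / (p - 1)`; rescaling
-- the point of tangency to `1` turns this into Bernoulli's inequality.
lemma sub_one_le_Kp_mul_rpow {t : ℝ} (hp : 1 < p) (ht : 0 ≤ t) : t - 1 ≤ Kp p * t ^ p := by
  have hp0 : 0 < p := by linarith
  have hc : 0 < (p - 1) / p := div_pos (by linarith) hp0
  have hKp : ((p - 1) / p) ^ p = (p - 1) * Kp p := by
    rw [Kp, ← sub_add_cancel p 1, Real.rpow_add_one (by simpa using hc.ne')]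
    ring_nf
  have hbernoulli := one_add_mul_self_le_rpow_one_add (s := (p - 1) / p * t - 1)
    (by linarith [mul_nonneg hc.le ht]) hp.le
  refine le_of_mul_le_mul_left ?_ (sub_pos.2 hp)
  calc (p - 1) * (t - 1)
      = 1 + p * ((p - 1) / p * t - 1) := by
        field_simp
        ring
    _ ≤ ((p - 1) / p * t) ^ p := by simpa using hbernoulli
    _ = (p - 1) * (Kp p * t ^ p) := by rw [Real.mul_rpow hc.le ht, hKp, mul_assoc]

lemma truncB_eq_inv_max (x : B) : truncB x = (max 1 ‖x‖)⁻¹ := by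
  unfold truncB
  split_ifs with h
  · simp [h]
  have hx : 0 < ‖x‖ := norm_pos_iff.2 h
  rcases le_total 1 ‖x‖ with h1 | h1
  · rw [min_eq_left h1, max_eq_right h1, one_div]
  · rw [min_eq_right h1, max_eq_left h1, div_self hx.ne', inv_one]

variable [NormedSpace ℝ B]

lemma norm_unitBallProj (x : B) : ‖unitBallProj x‖ = ‖x‖ / max 1 ‖x‖ := by
  rw [unitBallProj, truncB_eq_inv_max, norm_smul, norm_inv, Real.norm_of_nonneg (by positivity),
    inv_mul_eq_div]

lemma norm_unitBallProj_le_one (x : B) : ‖unitBallProj x‖ ≤ 1 := by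
  rw [norm_unitBallProj]
  exact div_le_one_of_le₀ (le_max_right _ _) (by positivity)

lemma norm_unitBallProj_le_norm (x : B) : ‖unitBallProj x‖ ≤ ‖x‖ := by
  rw [norm_unitBallProj]
  exact div_le_self (norm_nonneg x) (le_max_left _ _)

lemma norm_unitBallProj_sub_self_le (hp : 1 < p) (x : B) :
    ‖unitBallProj x - x‖ ≤ Kp p * ‖x‖ ^ p := by
  have hKp := Kp_nonneg hp.le
  rw [unitBallProj, truncB_eq_inv_max]
  rcases le_total ‖x‖ 1 with h1 | h1
  · rw [max_eq_left h1, inv_one, one_smul, sub_self, norm_zero]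
    positivity
  · have hx : ‖x‖ ≠ 0 := by linarith
    calc ‖(max 1 ‖x‖)⁻¹ • x - x‖
        = ‖(‖x‖⁻¹ - 1) • x‖ := by rw [max_eq_right h1, sub_smul, one_smul]
      _ = ‖x‖ - 1 := by
          rw [norm_smul, Real.norm_of_nonpos (sub_nonpos.2 (inv_le_one_of_one_le₀ h1)), neg_sub,
            one_sub_mul, inv_mul_cancel₀ hx]
      _ ≤ Kp p * ‖x‖ ^ p := sub_one_le_Kp_mul_rpow hp (norm_nonneg x)

lemma continuous_unitBallProj : Continuous (unitBallProj : B → B) := by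
  have heq : (unitBallProj : B → B) = fun x => (max 1 ‖x‖)⁻¹ • x :=
    funext fun x => by rw [unitBallProj, truncB_eq_inv_max]
  rw [heq]
  exact (Continuous.inv₀ (by fun_prop) fun x => by positivity).smul continuous_id

end Truncation

section TruncatedIncrements

variable {Ω : Type*} {m mΩ : MeasurableSpace Ω} {P : Measure Ω} [IsFiniteMeasure P]
  {B : Type*} [NormedAddCommGroup B]
  {U W : Ω → B} {β p σ : ℝ}

lemma condExp_le_const_mul_add (hm : m ≤ mΩ) {f g : Ω → ℝ} {a b s : ℝ} (hf : Integrable f P)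
    (hg : Integrable g P) (ha : 0 ≤ a) (hfg : ∀ᵐ ω ∂P, f ω ≤ a * g ω + b)
    (hgs : ∀ᵐ ω ∂P, (P[g | m]) ω ≤ s) : ∀ᵐ ω ∂P, (P[f | m]) ω ≤ a * s + b := by
  have hmono : P[f | m] ≤ᵐ[P] P[a • g + fun _ => b | m] :=
    condExp_mono hf ((hg.smul a).add (integrable_const b)) hfg
  filter_upwards [hmono, condExp_add (hg.smul a) (integrable_const b) m, condExp_smul a g m, hgs]
    with ω hle hadd hsmul hs
  rw [hadd, Pi.add_apply, hsmul, condExp_const hm, Pi.smul_apply, smul_eq_mul] at hle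
  exact hle.trans (by gcongr)

lemma norm_sub_sq_le {x y : B} (hp1 : 1 ≤ p) (hp2 : p ≤ 2) (hx : ‖x‖ ≤ 1) (hy : ‖y‖ ≤ 1) :
    ‖x - y‖ ^ 2 ≤ 2 * ‖x‖ ^ p + 2 * ‖y‖ ^ p := by
  have hxy : ‖x - y‖ / 2 ≤ 1 := by linarith [norm_sub_le x y]
  calc ‖x - y‖ ^ 2
      = 2 ^ 2 * (‖x - y‖ / 2) ^ (2 : ℝ) := by
        rw [Real.rpow_two]
        ring
    _ ≤ 2 ^ 2 * (‖x - y‖ / 2) ^ p := by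
        gcongr 2 ^ 2 * ?_
        exact Real.rpow_le_rpow_of_exponent_ge' (by positivity) hxy (by linarith) hp2
    _ ≤ 2 ^ 2 * (1 / 2 * ‖x‖ ^ p + 1 / 2 * ‖y‖ ^ p) := by
        gcongr 2 ^ 2 * ?_
        calc (‖x - y‖ / 2) ^ p
            ≤ (1 / 2 * ‖x‖ + 1 / 2 * ‖y‖) ^ p := by
              gcongr
              linarith [norm_sub_le x y]
          _ ≤ 1 / 2 * ‖x‖ ^ p + 1 / 2 * ‖y‖ ^ p :=
              (convexOn_rpow hp1).2 (mem_Ici.2 (norm_nonneg x)) (mem_Ici.2 (norm_nonneg y))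
                (by norm_num) (by norm_num) (by norm_num)
    _ = 2 * ‖x‖ ^ p + 2 * ‖y‖ ^ p := by ring

variable [NormedSpace ℝ B]

lemma memLp_unitBallProj (hU : AEStronglyMeasurable U P) (q : ENNReal) :
    MemLp (fun ω => unitBallProj (U ω)) q P :=
  .of_bound (continuous_unitBallProj.comp_aestronglyMeasurable hU) 1
    (ae_of_all P fun ω => norm_unitBallProj_le_one (U ω))

lemma condExp_norm_unitBallProj_rpow_le (hp : 0 < p) (hU : MemLp U (ENNReal.ofReal p) P)
    (hUσ : ∀ᵐ ω ∂P, (P[fun ω' => ‖U ω'‖ ^ p | m]) ω ≤ σ) :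
    ∀ᵐ ω ∂P, (P[fun ω' => ‖unitBallProj (U ω')‖ ^ p | m]) ω ≤ σ := by
  have hmono := condExp_mono (m := m)
    (integrable_norm_rpow hp (memLp_unitBallProj hU.1 (ENNReal.ofReal p)))
    (integrable_norm_rpow hp hU) (ae_of_all P fun ω =>
      Real.rpow_le_rpow (norm_nonneg _) (norm_unitBallProj_le_norm (U ω)) hp.le)
  filter_upwards [hmono, hUσ] with ω hω hσ using hω.trans hσ

variable [CompleteSpace B]

lemma condExp_norm_sub_condExp_sq_le (hm : m ≤ mΩ) (hp1 : 1 ≤ p) (hp2 : p ≤ 2)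
    (hW : AEStronglyMeasurable W P) (hW1 : ∀ᵐ ω ∂P, ‖W ω‖ ≤ 1)
    (hWσ : ∀ᵐ ω ∂P, (P[fun ω' => ‖W ω'‖ ^ p | m]) ω ≤ σ) :
    ∀ᵐ ω ∂P, (P[fun ω' => ‖W ω' - (P[W | m]) ω'‖ ^ 2 | m]) ω ≤ 4 * σ := by
  have hWp : Integrable (fun ω => ‖W ω‖ ^ p) P :=
    integrable_norm_rpow (by linarith) (MemLp.of_bound hW 1 hW1)
  have hE1 := ae_bdd_norm_condExp_of_ae_bdd_norm (m := m) hW1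
  have hdi : Integrable (fun ω => ‖W ω - (P[W | m]) ω‖ ^ 2) P :=
    integrable_norm_pow_of_bound (R := 1 + 1) (hW.sub integrable_condExp.1)
      (by filter_upwards [hW1, hE1] with ω hω hE using norm_sub_le_of_le hω hE) 2
  have hle : ∀ᵐ ω ∂P, ‖W ω - (P[W | m]) ω‖ ^ 2 ≤ 2 * ‖W ω‖ ^ p + 2 * σ := by
    filter_upwards [hW1, hE1, Integrable.norm_condExp_rpow_le hp1 hWp, hWσ] with ω hω hE hjensen hσ
    exact (norm_sub_sq_le hp1 hp2 hω hE).trans (by gcongr; exact hjensen.trans hσ)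
  filter_upwards [condExp_le_const_mul_add hm hdi hWp zero_le_two hle hWσ] with ω hω
  linarith

lemma condExp_sub_condExp_eq_zero (hm : m ≤ mΩ) (hW : Integrable W P) :
    P[fun ω => W ω - (P[W | m]) ω | m] =ᵐ[P] 0 := by
  filter_upwards [condExp_sub hW (integrable_condExp (m := m) (f := W)) m] with ω hω
  refine hω.trans ?_
  rw [Pi.sub_apply, condExp_of_stronglyMeasurable hm stronglyMeasurable_condExp integrable_condExp,
    sub_self, Pi.zero_apply]

lemma norm_condExp_unitBallProj_sub_le (hm : m ≤ mΩ) (hp : 1 < p)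
    (hU : MemLp U (ENNReal.ofReal p) P)
    (hUσ : ∀ᵐ ω ∂P, (P[fun ω' => ‖U ω'‖ ^ p | m]) ω ≤ σ) :
    ∀ᵐ ω ∂P, ‖(P[fun ω' => unitBallProj (U ω') | m]) ω - (P[U | m]) ω‖ ≤ Kp p * σ := by
  have hUi : Integrable U P := hU.integrable (ENNReal.one_le_ofReal.2 hp.le)
  have hWi : Integrable (fun ω => unitBallProj (U ω)) P :=
    memLp_one_iff_integrable.1 (memLp_unitBallProj hU.1 1)
  have hbias := condExp_le_const_mul_add (b := 0) hm (hWi.sub hUi).norm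
    (integrable_norm_rpow (by linarith) hU) (Kp_nonneg hp.le)
    (ae_of_all P fun ω => by
      rw [add_zero]
      exact norm_unitBallProj_sub_self_le hp (U ω)) hUσ
  filter_upwards [condExp_sub hWi hUi m, norm_condExp_le (μ := P) (m := m)
    ((fun ω => unitBallProj (U ω)) - U), hbias] with ω hsub hnorm hω
  rw [hsub, Pi.sub_apply] at hnorm
  simpa using hnorm.trans hω

lemma norm_sum_unitBallProj_sub_condExp_le (hp : 1 < p) {𝒢 : Filtration ℕ mΩ} {U : ℕ → Ω → B}
    (hU : ∀ i, MemLp (U i) (ENNReal.ofReal p) P)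
    (hUσ : ∀ i, ∀ᵐ ω ∂P, (P[fun ω' => ‖U i ω'‖ ^ p | 𝒢 i]) ω ≤ σ) (n : ℕ) :
    ∀ᵐ ω ∂P, ‖∑ i ∈ Finset.range n, (unitBallProj (U i ω) - (P[U i | 𝒢 i]) ω)‖
      ≤ ‖∑ i ∈ Finset.range n,
          (unitBallProj (U i ω) - (P[fun ω' => unitBallProj (U i ω') | 𝒢 i]) ω)‖
        + n * (Kp p * σ) := by
  filter_upwards [ae_all_iff.2 fun i =>
    norm_condExp_unitBallProj_sub_le (𝒢.le i) hp (hU i) (hUσ i)] with ω hbias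
  calc ‖∑ i ∈ Finset.range n, (unitBallProj (U i ω) - (P[U i | 𝒢 i]) ω)‖
      = ‖∑ i ∈ Finset.range n,
            (unitBallProj (U i ω) - (P[fun ω' => unitBallProj (U i ω') | 𝒢 i]) ω)
          + ∑ i ∈ Finset.range n,
            ((P[fun ω' => unitBallProj (U i ω') | 𝒢 i]) ω - (P[U i | 𝒢 i]) ω)‖ := by
        simp only [← Finset.sum_add_distrib, sub_add_sub_cancel]
    _ ≤ _ := by
        refine norm_add_le_of_le le_rfl ((norm_sum_le_of_le _ fun i _ => hbias i).trans_eq ?_)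
        rw [Finset.sum_const, Finset.card_range, nsmul_eq_mul]

end TruncatedIncrements

section TruncatedSum

variable {Ω : Type*} {mΩ : MeasurableSpace Ω} {P : Measure Ω} [IsProbabilityMeasure P]
  {B : Type*} [NormedAddCommGroup B] [NormedSpace ℝ B] [CompleteSpace B]
  {U : ℕ → Ω → B} {𝒢 : Filtration ℕ mΩ} {β p σ δ : ℝ}

lemma IsTwoSmooth.measureReal_le_norm_sum_unitBallProj_sub_condExp_le
    (hB : IsTwoSmooth B β) (hβ : 1 ≤ β) (hp1 : 1 ≤ p) (hp2 : p ≤ 2) (hσ : 0 ≤ σ)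
    (hU : ∀ i, StronglyMeasurable[𝒢 (i + 1)] (U i))
    (hUp : ∀ i, MemLp (U i) (ENNReal.ofReal p) P)
    (hUσ : ∀ i, ∀ᵐ ω ∂P, (P[fun ω' => ‖U i ω'‖ ^ p | 𝒢 i]) ω ≤ σ) (n : ℕ) (hδ : 0 < δ) :
    P.real {ω | β * Real.log (2 / δ) + n * (4 * β * expQuot (2 / β) * σ)
      ≤ ‖∑ i ∈ Finset.range n,
          (unitBallProj (U i ω) - (P[fun ω' => unitBallProj (U i ω') | 𝒢 i]) ω)‖} ≤ δ := by
  have hβ0 : 0 < β := by linarith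
  set W : ℕ → Ω → B := fun i ω => unitBallProj (U i ω)
  have hWi (i : ℕ) : Integrable (W i) P :=
    memLp_one_iff_integrable.1 (memLp_unitBallProj (hUp i).1 1)
  have hW1 (i : ℕ) : ∀ᵐ ω ∂P, ‖W i ω‖ ≤ 1 :=
    ae_of_all P fun ω => norm_unitBallProj_le_one (U i ω)
  have hd : IsMartingaleDifference (fun i ω => W i ω - (P[W i | 𝒢 i]) ω) 𝒢 P :=
    ⟨fun i => (continuous_unitBallProj.comp_stronglyMeasurable (hU i)).sub
      (stronglyMeasurable_condExp.mono (𝒢.mono i.le_succ)),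
      fun i => condExp_sub_condExp_eq_zero (𝒢.le i) (hWi i)⟩
  have hd2 (i : ℕ) : ∀ᵐ ω ∂P, ‖W i ω - (P[W i | 𝒢 i]) ω‖ ≤ 2 := by
    filter_upwards [hW1 i, ae_bdd_norm_condExp_of_ae_bdd_norm (m := 𝒢 i) (hW1 i)] with ω hω hE
    exact (norm_sub_le_of_le hω hE).trans_eq one_add_one_eq_two
  have htail := hB.measureReal_le_norm_sum_le_of_scale hβ (by positivity) hd hd2
    (fun i => condExp_norm_sub_condExp_sq_le (𝒢.le i) hp1 hp2 (hWi i).1 (hW1 i)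
      (condExp_norm_unitBallProj_rpow_le (by linarith) (hUp i) (hUσ i)))
    n (inv_pos.2 hβ0) hδ
  have hscale : (Real.log (2 / δ) + n * (β ^ 2 * expQuot (β⁻¹ * 2) * (β⁻¹ ^ 2 * (4 * σ)))) / β⁻¹
      = β * Real.log (2 / δ) + n * (4 * β * expQuot (2 / β) * σ) := by
    rw [inv_mul_eq_div]
    field_simp
  rwa [hscale] at htail

theorem IsTwoSmooth.measureReal_lt_norm_sum_unitBallProj_sub_le
    (hB : IsTwoSmooth B β) (hβ : 1 ≤ β) (hp1 : 1 < p) (hp2 : p ≤ 2) (hσ : 0 ≤ σ)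
    (hU : ∀ i, StronglyMeasurable[𝒢 (i + 1)] (U i))
    (hUp : ∀ i, MemLp (U i) (ENNReal.ofReal p) P)
    (hUσ : ∀ i, ∀ᵐ ω ∂P, (P[fun ω' => ‖U i ω'‖ ^ p | 𝒢 i]) ω ≤ σ) (n : ℕ) (hδ : 0 < δ) :
    P.real {ω | β * Real.log (2 / δ) + n * ((4 * β * expQuot (2 / β) + Kp p) * σ)
      < ‖∑ i ∈ Finset.range n, (unitBallProj (U i ω) - (P[U i | 𝒢 i]) ω)‖} ≤ δ := by
  refine le_trans (ENNReal.toReal_mono (measure_ne_top _ _) (measure_mono_ae ?_))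
    (hB.measureReal_le_norm_sum_unitBallProj_sub_condExp_le hβ hp1.le hp2 hσ hU hUp hUσ n hδ)
  filter_upwards [norm_sum_unitBallProj_sub_condExp_le hp1 hUp hUσ n] with ω hbias
  intro hω
  change _ < _ at hω
  change _ ≤ _
  linarith

end TruncatedSum

section SampleMean

variable {Ω : Type*} {mΩ : MeasurableSpace Ω} {P : Measure Ω} [IsProbabilityMeasure P]
  {B : Type*} [NormedAddCommGroup B] [NormedSpace ℝ B] [CompleteSpace B]
  {d : ℕ → Ω → B} {𝒢 : Filtration ℕ mΩ} {β p v r : ℝ} {k : ℕ}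

lemma integral_le_of_condExp_le {m : MeasurableSpace Ω} (hm : m ≤ mΩ) {f : Ω → ℝ}
    (hf : ∀ᵐ ω ∂P, (P[f | m]) ω ≤ v) : ∫ ω, f ω ∂P ≤ v :=
  calc ∫ ω, f ω ∂P = ∫ ω, (P[f | m]) ω ∂P := (integral_condExp hm).symm
    _ ≤ ∫ _, v ∂P := integral_mono_ae integrable_condExp (integrable_const v) hf
    _ = v := by rw [integral_const, probReal_univ, one_smul]

lemma IsTwoSmooth.integral_norm_mean_rpow_le (hB : IsTwoSmooth B β) (hβ : 0 ≤ β) (hp1 : 1 ≤ p)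
    (hp2 : p ≤ 2) (hd : IsMartingaleDifference d 𝒢 P)
    (hdp : ∀ i, MemLp (d i) (ENNReal.ofReal p) P)
    (hdv : ∀ i, ∀ᵐ ω ∂P, (P[fun ω' => ‖d i ω'‖ ^ p | 𝒢 i]) ω ≤ v) (hk : 0 < k) :
    ∫ ω, ‖(k : ℝ)⁻¹ • ∑ i ∈ Finset.range k, d i ω‖ ^ p ∂P
      ≤ 2 * β ^ p * v / (k : ℝ) ^ (p - 1) := by
  have hk0 : (0 : ℝ) < k := by exact_mod_cast hk
  calc ∫ ω, ‖(k : ℝ)⁻¹ • ∑ i ∈ Finset.range k, d i ω‖ ^ p ∂P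
      = (k : ℝ)⁻¹ ^ p * ∫ ω, ‖∑ i ∈ Finset.range k, d i ω‖ ^ p ∂P := by
        rw [← integral_const_mul]
        congr 1 with ω
        rw [norm_smul, Real.norm_of_nonneg (by positivity),
          Real.mul_rpow (by positivity) (norm_nonneg _)]
    _ ≤ (k : ℝ)⁻¹ ^ p * (2 * β ^ p * ∑ _i ∈ Finset.range k, v) := by
        gcongr
        refine (hB.integral_norm_sum_rpow_le hβ hp1 hp2 hd hdp k).trans ?_
        gcongr
        exact integral_le_of_condExp_le (𝒢.le _) (hdv _)
    _ = 2 * β ^ p * v / (k : ℝ) ^ (p - 1) := by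
        rw [Finset.sum_const, Finset.card_range, nsmul_eq_mul, Real.inv_rpow hk0.le,
          Real.rpow_sub_one hk0.ne']
        field_simp

lemma IsTwoSmooth.measureReal_lt_norm_mean_le (hB : IsTwoSmooth B β) (hβ : 0 ≤ β) (hp1 : 1 ≤ p)
    (hp2 : p ≤ 2) (hd : IsMartingaleDifference d 𝒢 P)
    (hdp : ∀ i, MemLp (d i) (ENNReal.ofReal p) P)
    (hdv : ∀ i, ∀ᵐ ω ∂P, (P[fun ω' => ‖d i ω'‖ ^ p | 𝒢 i]) ω ≤ v) (hk : 0 < k) (hr : 0 < r) :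
    P.real {ω | r < ‖(k : ℝ)⁻¹ • ∑ i ∈ Finset.range k, d i ω‖}
      ≤ 2 * β ^ p * v / ((k : ℝ) ^ (p - 1) * r ^ p) := by
  have hp0 : 0 < p := by linarith
  have hmem : MemLp (fun ω => (k : ℝ)⁻¹ • ∑ i ∈ Finset.range k, d i ω) (ENNReal.ofReal p) P :=
    (memLp_finsetSum _ fun i _ => hdp i).const_smul _
  have hmarkov := mul_meas_ge_le_integral_of_nonneg
    (ae_of_all P fun ω => Real.rpow_nonneg (norm_nonneg _) p) (integrable_norm_rpow hp0 hmem)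
    (r ^ p)
  rw [← div_div, le_div_iff₀' (by positivity)]
  calc r ^ p * P.real {ω | r < ‖(k : ℝ)⁻¹ • ∑ i ∈ Finset.range k, d i ω‖}
      ≤ r ^ p * P.real {ω | r ^ p ≤ ‖(k : ℝ)⁻¹ • ∑ i ∈ Finset.range k, d i ω‖ ^ p} := by
        refine mul_le_mul_of_nonneg_left (measureReal_mono fun ω hω => ?_) (by positivity)
        exact Real.rpow_le_rpow hr.le (le_of_lt hω) hp0.le
    _ ≤ 2 * β ^ p * v / (k : ℝ) ^ (p - 1) :=
        hmarkov.trans (hB.integral_norm_mean_rpow_le hβ hp1 hp2 hd hdp hdv hk)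

end SampleMean

section TruncatedMean

variable {B : Type*} [NormedAddCommGroup B] [NormedSpace ℝ B]

/-- The truncated mean of `y 0, …, y (n - 1)` around the centre `z`: each `y i` is first projected
onto the closed ball of radius `1 / lam` around `z`. -/
noncomputable def truncatedMean (lam : ℝ) (n : ℕ) (y : ℕ → B) (z : B) : B :=
  (n : ℝ)⁻¹ • ∑ i ∈ Finset.range n, (truncB (lam • (y i - z)) • (y i - z) + z)

lemma truncatedMean_sub_const (lam : ℝ) {n : ℕ} (hn : 0 < n) (y : ℕ → B) (z a : B) :
    truncatedMean lam n (fun i => y i - a) (z - a) = truncatedMean lam n y z - a := by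
  have hn0 : (n : ℝ) ≠ 0 := by exact_mod_cast hn.ne'
  simp only [truncatedMean, sub_sub_sub_cancel_right, add_sub_assoc', Finset.sum_sub_distrib]
  rw [smul_sub, Finset.sum_const, Finset.card_range, ← Nat.cast_smul_eq_nsmul ℝ,
    inv_smul_smul₀ hn0]

lemma smul_truncatedMean (lam : ℝ) {n : ℕ} (hn : 0 < n) (y : ℕ → B) (z : B) :
    (lam * n) • truncatedMean lam n y z
      = ∑ i ∈ Finset.range n, (unitBallProj (lam • (y i - z)) + lam • z) := by
  have hn0 : (n : ℝ) ≠ 0 := by exact_mod_cast hn.ne'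
  rw [truncatedMean, mul_smul, smul_inv_smul₀ hn0, Finset.smul_sum]
  simp only [unitBallProj, smul_add, smul_comm lam (truncB _)]

lemma smul_sum_Ioc_eq_truncatedMean (lam : ℝ) (k n : ℕ) (x : ℕ → B) (z : B) :
    (n : ℝ)⁻¹ • ∑ m ∈ Finset.Ioc k (k + n), (truncB (lam • (x m - z)) • (x m - z) + z)
      = truncatedMean lam n (fun i => x (k + i + 1)) z := by
  rw [truncatedMean, ← Finset.Ico_add_one_add_one_eq_Ioc, Finset.sum_Ico_eq_sum_range]
  simp only [Nat.add_sub_add_right, Nat.add_sub_cancel_left, Nat.add_right_comm]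

end TruncatedMean

section RecentredIncrement

variable {Ω : Type*} {m mΩ : MeasurableSpace Ω} {P : Measure Ω} [IsFiniteMeasure P]
  {B : Type*} [NormedAddCommGroup B] [NormedSpace ℝ B]
  {d c : Ω → B} {p v r lam : ℝ}

lemma condExp_norm_smul_sub_rpow_le (hm : m ≤ mΩ) (hp : 1 ≤ p) (hlam : 0 ≤ lam)
    (hdp : MemLp d (ENNReal.ofReal p) P)
    (hdv : ∀ᵐ ω ∂P, (P[fun ω' => ‖d ω'‖ ^ p | m]) ω ≤ v)
    (hc : AEStronglyMeasurable c P) (hcr : ∀ ω, ‖c ω‖ ≤ r) :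
    ∀ᵐ ω ∂P, (P[fun ω' => ‖lam • (d ω' - c ω')‖ ^ p | m]) ω
      ≤ lam ^ p * 2 ^ (p - 1) * (v + r ^ p) := by
  have hp0 : 0 < p := by linarith
  have hU : MemLp (fun ω => lam • (d ω - c ω)) (ENNReal.ofReal p) P :=
    (hdp.sub (.of_bound hc r (ae_of_all P hcr))).const_smul lam
  have hle (ω : Ω) : ‖lam • (d ω - c ω)‖ ^ p
      ≤ lam ^ p * 2 ^ (p - 1) * ‖d ω‖ ^ p + lam ^ p * 2 ^ (p - 1) * r ^ p := by
    calc ‖lam • (d ω - c ω)‖ ^ p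
        = lam ^ p * ‖d ω - c ω‖ ^ p := by
          rw [norm_smul, Real.norm_of_nonneg hlam, Real.mul_rpow hlam (norm_nonneg _)]
      _ ≤ lam ^ p * (‖d ω‖ + r) ^ p := by
          gcongr
          exact norm_sub_le_of_le le_rfl (hcr ω)
      _ ≤ lam ^ p * (2 ^ (p - 1) * (‖d ω‖ ^ p + r ^ p)) := by
          gcongr
          exact add_rpow_le_mul_rpow_add_rpow hp (norm_nonneg _) ((norm_nonneg _).trans (hcr ω))
      _ = _ := by ring
  filter_upwards [condExp_le_const_mul_add hm (integrable_norm_rpow hp0 hU)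
    (integrable_norm_rpow hp0 hdp) (by positivity) (ae_of_all P hle) hdv] with ω hω
  rwa [mul_add]

lemma condExp_smul_sub_eq [CompleteSpace B] (hm : m ≤ mΩ) (hd : Integrable d P)
    (hd0 : P[d | m] =ᵐ[P] 0) (hc : StronglyMeasurable[m] c) (hci : Integrable c P) :
    P[fun ω => lam • (d ω - c ω) | m] =ᵐ[P] fun ω => -(lam • c ω) := by
  filter_upwards [condExp_smul (μ := P) lam (d - c) m, condExp_sub hd hci m, hd0]
    with ω hsmul hsub h0
  rw [condExp_of_stronglyMeasurable hm hc hci, Pi.sub_apply, h0, Pi.zero_apply, zero_sub] at hsub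
  exact hsmul.trans (by rw [Pi.smul_apply, hsub, smul_neg])

end RecentredIncrement

section TruncatedMeanTail

variable {Ω : Type*} {mΩ : MeasurableSpace Ω} {P : Measure Ω} [IsProbabilityMeasure P]
  {B : Type*} [NormedAddCommGroup B] [NormedSpace ℝ B] [CompleteSpace B]
  {d : ℕ → Ω → B} {c : Ω → B} {𝒢 : Filtration ℕ mΩ} {β p v r lam δ : ℝ} {n : ℕ}

theorem IsTwoSmooth.measureReal_lt_norm_truncatedMean_le_of_bound (hB : IsTwoSmooth B β)
    (hβ : 1 ≤ β) (hp1 : 1 < p) (hp2 : p ≤ 2) (hv : 0 ≤ v) (hd : IsMartingaleDifference d 𝒢 P)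
    (hdp : ∀ i, MemLp (d i) (ENNReal.ofReal p) P)
    (hdv : ∀ i, ∀ᵐ ω ∂P, (P[fun ω' => ‖d i ω'‖ ^ p | 𝒢 i]) ω ≤ v)
    (hc : StronglyMeasurable[𝒢 0] c) (hr : 0 ≤ r) (hcr : ∀ ω, ‖c ω‖ ≤ r) (hlam : 0 ≤ lam)
    (hn : 0 < n) (hδ : 0 < δ) :
    P.real {ω | β * Real.log (2 / δ)
        + n * ((4 * β * expQuot (2 / β) + Kp p) * (lam ^ p * 2 ^ (p - 1) * (v + r ^ p)))
      < lam * n * ‖truncatedMean lam n (fun i => d i ω) (c ω)‖} ≤ δ := by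
  have hcP : AEStronglyMeasurable c P := (hc.mono (𝒢.le 0)).aestronglyMeasurable
  have hcp (q : ENNReal) : MemLp c q P := .of_bound hcP r (ae_of_all P hcr)
  have hci (i : ℕ) : StronglyMeasurable[𝒢 i] c := hc.mono (𝒢.mono i.zero_le)
  refine le_trans (ENNReal.toReal_mono (measure_ne_top _ _) (measure_mono_ae ?_))
    (hB.measureReal_lt_norm_sum_unitBallProj_sub_le (𝒢 := 𝒢)
      (U := fun i ω => lam • (d i ω - c ω)) hβ hp1 hp2 (by positivity)
      (fun i => ((hd.stronglyMeasurable i).sub (hci (i + 1))).const_smul lam)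
      (fun i => ((hdp i).sub (hcp _)).const_smul lam)
      (fun i => condExp_norm_smul_sub_rpow_le (𝒢.le i) hp1.le hlam (hdp i) (hdv i) hcP hcr) n hδ)
  filter_upwards [ae_all_iff.2 fun i => condExp_smul_sub_eq (lam := lam) (𝒢.le i)
    ((hdp i).integrable (ENNReal.one_le_ofReal.2 hp1.le)) (hd.condExp_eq_zero i) (hci i)
    ((hcp 1).integrable le_rfl)] with ω hcond
  intro hω
  change _ < _ at hω ⊢
  simp only [hcond, sub_neg_eq_add]
  rwa [← smul_truncatedMean lam hn (fun i => d i ω), norm_smul, Real.norm_of_nonneg (by positivity)]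

-- The centre is only close to the mean with high probability: replacing it by the mean on the
-- complementary event, which is known at time `0`, preserves the adaptedness of the increments.
theorem IsTwoSmooth.measureReal_lt_norm_truncatedMean_le (hB : IsTwoSmooth B β)
    (hβ : 1 ≤ β) (hp1 : 1 < p) (hp2 : p ≤ 2) (hv : 0 ≤ v) (hd : IsMartingaleDifference d 𝒢 P)
    (hdp : ∀ i, MemLp (d i) (ENNReal.ofReal p) P)
    (hdv : ∀ i, ∀ᵐ ω ∂P, (P[fun ω' => ‖d i ω'‖ ^ p | 𝒢 i]) ω ≤ v)
    (hc : StronglyMeasurable[𝒢 0] c) (hr : 0 ≤ r) (hlam : 0 ≤ lam) (hn : 0 < n) (hδ : 0 < δ) :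
    P.real {ω | β * Real.log (2 / δ)
        + n * ((4 * β * expQuot (2 / β) + Kp p) * (lam ^ p * 2 ^ (p - 1) * (v + r ^ p)))
      < lam * n * ‖truncatedMean lam n (fun i => d i ω) (c ω)‖} ≤ δ + P.real {ω | r < ‖c ω‖} := by
  set A : Set Ω := {ω | ‖c ω‖ ≤ r} with hA
  have hAm : MeasurableSet[𝒢 0] A := hc.norm.measurableSet_le stronglyMeasurable_const
  have hbound (ω : Ω) : ‖A.indicator c ω‖ ≤ r := by
    by_cases hω : ω ∈ A
    · rwa [indicator_of_mem hω]
    · rwa [indicator_of_notMem hω, norm_zero]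
  refine le_trans ?_ (add_le_add_left (hB.measureReal_lt_norm_truncatedMean_le_of_bound hβ hp1 hp2
    hv hd hdp hdv (hc.indicator hAm) hr hbound hlam hn hδ) _)
  refine (measureReal_mono fun ω hω => ?_).trans (measureReal_union_le _ _)
  by_cases hωA : ω ∈ A
  · exact Or.inl (by rwa [mem_ofPred_eq, indicator_of_mem hωA])
  · exact Or.inr (by rwa [hA, mem_ofPred_eq, not_le] at hωA)

end TruncatedMeanTail

section OptimalScale

variable {p : ℝ}

lemma expQuot_mul_two_rpow_eq_frakC (β : ℝ) :
    (4 * β * expQuot (2 / β) + Kp p) * 2 ^ (p - 1)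
      = β * frakC p (1 / β) + Kp p * 2 ^ (p - 1) := by
  rw [frakC, expQuot, mul_one_div, Real.rpow_add two_pos, Real.rpow_sub two_pos, Real.rpow_one]
  ring

lemma frakC_pos {ρ : ℝ} (hρ : 0 < ρ) : 0 < frakC p ρ := by
  have hexp : 0 < Real.exp (2 * ρ) - 2 * ρ - 1 := by
    linarith [Real.add_one_lt_exp (by positivity : 2 * ρ ≠ 0)]
  unfold frakC
  positivity

-- `lam` balances the two terms of the error bound, so each of them equals `a`.
lemma le_two_mul_rpow_of_mul_le_add {a w lam x : ℝ} (hp : 0 < p) (ha : 0 < a) (hw : 0 < w)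
    (hlam : lam = (a / w) ^ (1 / p)) (hx : lam * x ≤ a + w * lam ^ p) :
    x ≤ 2 * w ^ (1 / p) * a ^ ((p - 1) / p) := by
  have hlam0 : 0 < lam := by
    rw [hlam]
    positivity
  have hbalance : w * lam ^ p = a := by
    rw [hlam, one_div, Real.rpow_inv_rpow (by positivity) hp.ne']
    field_simp
  have hrate : lam * (w ^ (1 / p) * a ^ ((p - 1) / p)) = a := by
    rw [hlam, ← mul_assoc, ← Real.mul_rpow (by positivity) hw.le, div_mul_cancel₀ a hw.ne',
      ← Real.rpow_add ha, ← add_div, add_sub_cancel, div_self hp.ne', Real.rpow_one]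
  refine le_of_mul_le_mul_left ?_ hlam0
  calc lam * x ≤ a + a := by rwa [hbalance] at hx
    _ = lam * (2 * w ^ (1 / p) * a ^ ((p - 1) / p)) := by linear_combination (-2) * hrate

end OptimalScale

section Estimator

variable {Ω : Type*} {mΩ : MeasurableSpace Ω} {P : Measure Ω} [IsProbabilityMeasure P]
  {B : Type*} [NormedAddCommGroup B] [NormedSpace ℝ B] [CompleteSpace B]
  {d : ℕ → Ω → B} {c : Ω → B} {𝒢 : Filtration ℕ mΩ} {β p v r lam δ δ' : ℝ} {k n : ℕ}

theorem IsTwoSmooth.measureReal_lt_norm_truncatedMean_le_of_optimal (hB : IsTwoSmooth B β)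
    (hβ : 1 ≤ β) (hp1 : 1 < p) (hp2 : p ≤ 2) (hv : 0 < v) (hd : IsMartingaleDifference d 𝒢 P)
    (hdp : ∀ i, MemLp (d i) (ENNReal.ofReal p) P)
    (hdv : ∀ i, ∀ᵐ ω ∂P, (P[fun ω' => ‖d i ω'‖ ^ p | 𝒢 i]) ω ≤ v)
    (hc : StronglyMeasurable[𝒢 0] c) (hr : 0 ≤ r) (hn : 0 < n) (hδ : δ ∈ Ioo 0 1)
    (hlam : lam = (β * Real.log (2 / δ) /
      (n * (β * frakC p (1 / β) + Kp p * 2 ^ (p - 1)) * (v + r ^ p))) ^ (1 / p)) :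
    P.real {ω | 2 * ((β * frakC p (1 / β) + Kp p * 2 ^ (p - 1)) * (v + r ^ p)) ^ (1 / p)
        * (β * Real.log (2 / δ) / n) ^ ((p - 1) / p)
      < ‖truncatedMean lam n (fun i => d i ω) (c ω)‖} ≤ δ + P.real {ω | r < ‖c ω‖} := by
  have hn0 : (0 : ℝ) < n := by exact_mod_cast hn
  have : 0 < β := by linarith
  have hlog : 0 < Real.log (2 / δ) :=
    Real.log_pos ((one_lt_div hδ.1).2 (by linarith [hδ.2]))
  have hfrakC : 0 < frakC p (1 / β) := frakC_pos (by positivity)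
  have hKp : 0 ≤ Kp p := Kp_nonneg hp1.le
  have hlam0 : 0 ≤ lam := by
    rw [hlam]
    positivity
  refine le_trans (measureReal_mono fun ω hω => ?_)
    (hB.measureReal_lt_norm_truncatedMean_le hβ hp1 hp2 hv.le hd hdp hdv hc hr hlam0 hn hδ.1)
  rw [mem_ofPred_eq] at hω ⊢
  contrapose! hω
  refine le_two_mul_rpow_of_mul_le_add (lam := lam) (by linarith) (by positivity) (by positivity)
    (by rw [hlam, div_div, mul_assoc]) ?_
  rw [← mul_le_mul_iff_right₀ hn0]
  calc n * (lam * ‖truncatedMean lam n (fun i => d i ω) (c ω)‖)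
      ≤ β * Real.log (2 / δ)
        + n * ((4 * β * expQuot (2 / β) + Kp p) * (lam ^ p * 2 ^ (p - 1) * (v + r ^ p))) := by
        linarith
    _ = _ := by
        rw [← expQuot_mul_two_rpow_eq_frakC]
        field_simp

lemma rpow_pilot_radius (hβ : 0 ≤ β) (hv : 0 ≤ v) (hp : 0 < p) (hδ : 0 ≤ δ) :
    (2 * β * v ^ (1 / p) * δ ^ (-(1 / p)) * (k : ℝ) ^ (-((p - 1) / p))) ^ p
      = 2 ^ p * β ^ p * v / (δ * (k : ℝ) ^ (p - 1)) := by
  have hk : (0 : ℝ) ≤ k := k.cast_nonneg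
  rw [Real.mul_rpow (by positivity) (by positivity), Real.mul_rpow (by positivity) (by positivity),
    Real.mul_rpow (by positivity) (by positivity), Real.mul_rpow zero_le_two hβ,
    ← Real.rpow_mul hv, ← Real.rpow_mul hδ, ← Real.rpow_mul hk, neg_mul, neg_mul,
    one_div_mul_cancel hp.ne', div_mul_cancel₀ _ hp.ne', Real.rpow_neg hδ, Real.rpow_neg hk,
    Real.rpow_one, Real.rpow_one, mul_assoc, ← mul_inv, ← div_eq_mul_inv]

lemma IsTwoSmooth.measureReal_pilot_radius_lt_norm_mean_le (hB : IsTwoSmooth B β) (hβ : 0 < β)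
    (hp1 : 1 ≤ p) (hp2 : p ≤ 2) (hv : 0 < v) (hd : IsMartingaleDifference d 𝒢 P)
    (hdp : ∀ i, MemLp (d i) (ENNReal.ofReal p) P)
    (hdv : ∀ i, ∀ᵐ ω ∂P, (P[fun ω' => ‖d i ω'‖ ^ p | 𝒢 i]) ω ≤ v) (hk : 0 < k) (hδ : 0 < δ) :
    P.real {ω | 2 * β * v ^ (1 / p) * δ ^ (-(1 / p)) * (k : ℝ) ^ (-((p - 1) / p))
      < ‖(k : ℝ)⁻¹ • ∑ i ∈ Finset.range k, d i ω‖} ≤ δ := by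
  have : (0 : ℝ) < k := by exact_mod_cast hk
  have htwo : (2 : ℝ) ≤ 2 ^ p := Real.self_le_rpow_of_one_le one_le_two hp1
  refine (hB.measureReal_lt_norm_mean_le hβ.le hp1 hp2 hd hdp hdv hk (by positivity)).trans ?_
  rw [rpow_pilot_radius hβ.le hv.le (by linarith) hδ.le]
  calc 2 * β ^ p * v / ((k : ℝ) ^ (p - 1) * (2 ^ p * β ^ p * v / (δ * (k : ℝ) ^ (p - 1))))
      = δ * (2 / 2 ^ p) := by field_simp
    _ ≤ δ := mul_le_of_le_one_right hδ.le ((div_le_one (by positivity)).2 htwo)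

lemma ofReal_one_sub_le_measure_of_measureReal_compl_le {s : Set Ω} {q : ℝ}
    (hs : P.real sᶜ ≤ q) : ENNReal.ofReal (1 - q) ≤ P s := by
  have hunion : 1 ≤ P.real s + P.real sᶜ := by
    simpa only [union_compl_self, probReal_univ] using measureReal_union_le (μ := P) s sᶜ
  refine ENNReal.ofReal_le_of_le_toReal ?_
  change 1 - q ≤ P.real s
  linarith

theorem IsTwoSmooth.measureReal_lt_norm_truncatedMean_mean_le (hB : IsTwoSmooth B β)
    (hβ : 1 ≤ β) (hp1 : 1 < p) (hp2 : p ≤ 2) (hv : 0 < v) (hd : IsMartingaleDifference d 𝒢 P)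
    (hdp : ∀ i, MemLp (d i) (ENNReal.ofReal p) P)
    (hdv : ∀ i, ∀ᵐ ω ∂P, (P[fun ω' => ‖d i ω'‖ ^ p | 𝒢 i]) ω ≤ v)
    (hk : 0 < k) (hn : 0 < n) (hδ : δ ∈ Ioo 0 1) (hδ' : 0 < δ')
    (hr : r = 2 * β * v ^ (1 / p) * δ' ^ (-(1 / p)) * (k : ℝ) ^ (-((p - 1) / p)))
    (hlam : lam = (β * Real.log (2 / δ) /
      (n * (β * frakC p (1 / β) + Kp p * 2 ^ (p - 1)) * (v + r ^ p))) ^ (1 / p)) :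
    P.real {ω | 2 * ((β * frakC p (1 / β) + Kp p * 2 ^ (p - 1)) *
          (v + 2 ^ p * β ^ p * v / (δ' * (k : ℝ) ^ (p - 1)))) ^ (1 / p)
        * (β * Real.log (2 / δ) / n) ^ ((p - 1) / p)
      < ‖truncatedMean lam n (fun i => d (k + i) ω)
          ((k : ℝ)⁻¹ • ∑ i ∈ Finset.range k, d i ω)‖} ≤ δ + δ' := by
  have hβ0 : 0 < β := by linarith
  have hpilot := hB.measureReal_pilot_radius_lt_norm_mean_le hβ0 hp1.le hp2 hv hd hdp hdv hk hδ'
  have htail := hB.measureReal_lt_norm_truncatedMean_le_of_optimal (r := r) hβ hp1 hp2 hv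
    (hd.shift k) (fun i => hdp (k + i)) (fun i => hdv (k + i))
    ((hd.stronglyMeasurable_sum k).const_smul (k : ℝ)⁻¹) (by rw [hr]; positivity) hn hδ hlam
  rw [← rpow_pilot_radius hβ0.le hv.le (by linarith) hδ'.le, ← hr]
  rw [← hr] at hpilot
  exact htail.trans (add_le_add_right hpilot δ)

end Estimator

theorem stmt14_general
    {B : Type*} [NormedAddCommGroup B] [NormedSpace ℝ B] [CompleteSpace B]
    {Ω : Type*} {mΩ : MeasurableSpace Ω} {P : Measure Ω} [IsProbabilityMeasure P]
    (β : ℝ) (hβ : 1 ≤ β)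
    (hsmooth : ∀ x y : B, ‖x + y‖ ^ 2 + ‖x - y‖ ^ 2 ≤ 2 * ‖x‖ ^ 2 + 2 * β ^ 2 * ‖y‖ ^ 2)
    (ℱ : Filtration ℕ mΩ) (X : ℕ → Ω → B) (μ : B) (p v : ℝ)
    (hp1 : 1 < p) (hp2 : p ≤ 2) (hv : 0 < v)
    (hadapted : ∀ n : ℕ, 1 ≤ n → StronglyMeasurable[ℱ n] (X n))
    (hmom : ∀ n : ℕ, 1 ≤ n → Integrable (fun ω => ‖X n ω‖ ^ p) P)
    (hcondmean : ∀ n : ℕ, P[X (n + 1) | ℱ n] =ᵐ[P] fun _ => μ)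
    (hcondmom : ∀ n : ℕ, ∀ᵐ ω ∂P, (P[fun ω' => ‖X (n + 1) ω' - μ‖ ^ p | ℱ n]) ω ≤ v)
    (k N : ℕ) (hk : 1 ≤ k) (hkN : k < N)
    (δ₁ δ₂ : ℝ) (hδ₁ : δ₁ ∈ Set.Ioo (0 : ℝ) 1) (hδ₂ : 0 < δ₂)
    (Z : Ω → B) (hZ : ∀ ω, Z ω = (k : ℝ)⁻¹ • ∑ m ∈ Finset.range k, X (m + 1) ω)
    (r₂ : ℝ) (hr₂ : r₂ = 2 * β * v ^ (1 / p) * δ₂ ^ (-(1 / p)) * (k : ℝ) ^ (-((p - 1) / p)))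
    (lam : ℝ)
    (hlam : lam = (β * Real.log (2 / δ₁) /
      (((N : ℝ) - k) * (β * frakC p (1 / β) + Kp p * 2 ^ (p - 1)) * (v + r₂ ^ p))) ^ (1 / p)) :
    ENNReal.ofReal (1 - δ₁ - δ₂) ≤
      P {ω |
        ‖((N : ℝ) - k)⁻¹ • (∑ m ∈ Finset.Ioc k N,
            (truncB (lam • (X m ω - Z ω)) • (X m ω - Z ω) + Z ω)) - μ‖ ≤
          2 * ((β * frakC p (1 / β) + Kp p * 2 ^ (p - 1)) *
              (v + 2 ^ p * β ^ p * v / (δ₂ * (k : ℝ) ^ (p - 1)))) ^ (1 / p) *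
            (β * Real.log (2 / δ₁) / ((N : ℝ) - k)) ^ ((p - 1) / p)} := by
  obtain ⟨n, rfl⟩ := Nat.exists_eq_add_of_le hkN.le
  have hn : 0 < n := by omega
  have hk0 : (k : ℝ) ≠ 0 := by exact_mod_cast (by omega : k ≠ 0)
  rw [Nat.cast_add, add_sub_cancel_left] at hlam ⊢
  have hXp (i : ℕ) : MemLp (X (i + 1)) (ENNReal.ofReal p) P :=
    (integrable_norm_rpow_iff_memLp (by linarith)
      ((hadapted _ i.succ_pos).mono (ℱ.le _)).aestronglyMeasurable).1 (hmom _ i.succ_pos)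
  have hd : IsMartingaleDifference (fun i ω => X (i + 1) ω - μ) ℱ P :=
    isMartingaleDifference_sub_const (fun i => hadapted _ i.succ_pos)
      (fun i => (hXp i).integrable (ENNReal.one_le_ofReal.2 hp1.le)) hcondmean
  have hZμ (ω : Ω) : (k : ℝ)⁻¹ • ∑ i ∈ Finset.range k, (X (i + 1) ω - μ) = Z ω - μ := by
    rw [Finset.sum_sub_distrib, Finset.sum_const, Finset.card_range, ← Nat.cast_smul_eq_nsmul ℝ,
      smul_sub, inv_smul_smul₀ hk0, hZ]
  have htail := IsTwoSmooth.measureReal_lt_norm_truncatedMean_mean_le hsmooth hβ hp1 hp2 hv hd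
    (fun i => (hXp i).sub (memLp_const μ)) hcondmom hk hn hδ₁ hδ₂ hr₂ hlam
  rw [sub_sub]
  refine ofReal_one_sub_le_measure_of_measureReal_compl_le (le_trans (le_of_eq ?_) htail)
  simp only [compl_ofPred, not_le, smul_sum_Ioc_eq_truncatedMean, hZμ,
    truncatedMean_sub_const lam hn]

/-- **Truncated estimator centered at the sample mean of the first `k` observations.**
Under the natural filtration, with `Ẑ` the sample mean of `X₁, …, X_k`,
`r₂ = 2βv^{1/p}δ₂^{-1/p}k^{-(p-1)/p}` and the optimized `λ`, with probability at least
`1 - δ₁ - δ₂`,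
`‖μ̂_N(k) - μ‖ ≤ 2((β𝔠_p + K_p2^{p-1})(v + 2^pβ^pv/(δ₂k^{p-1})))^{1/p}(β log(2/δ₁)/(N-k))^{(p-1)/p}`. -/
theorem stmt14
    {B : Type*} [NormedAddCommGroup B] [NormedSpace ℝ B] [CompleteSpace B]
    [TopologicalSpace.SeparableSpace B] [MeasurableSpace B] [BorelSpace B]
    {Ω : Type*} {mΩ : MeasurableSpace Ω} {P : Measure Ω} [IsProbabilityMeasure P]
    (β : ℝ) (hβ : 1 ≤ β)
    (hsmooth : ∀ x y : B, ‖x + y‖ ^ 2 + ‖x - y‖ ^ 2 ≤ 2 * ‖x‖ ^ 2 + 2 * β ^ 2 * ‖y‖ ^ 2)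
    (ℱ : Filtration ℕ mΩ) (X : ℕ → Ω → B) (μ : B) (p v : ℝ)
    (hp1 : 1 < p) (hp2 : p ≤ 2) (hv : 0 < v)
    (hadapted : ∀ n : ℕ, 1 ≤ n → StronglyMeasurable[ℱ n] (X n))
    (hint : ∀ n : ℕ, 1 ≤ n → Integrable (X n) P)
    (hmom : ∀ n : ℕ, 1 ≤ n → Integrable (fun ω => ‖X n ω‖ ^ p) P)
    (hcondmean : ∀ n : ℕ, P[X (n + 1) | ℱ n] =ᵐ[P] fun _ => μ)
    (hcondmom : ∀ n : ℕ, ∀ᵐ ω ∂P, (P[fun ω' => ‖X (n + 1) ω' - μ‖ ^ p | ℱ n]) ω ≤ v)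
    (hnat : ∀ n : ℕ, ℱ n = ⨆ m ∈ Set.Icc 1 n, MeasurableSpace.comap (X m) ‹MeasurableSpace B›)
    (k N : ℕ) (hk : 1 ≤ k) (hkN : k < N)
    (δ₁ δ₂ : ℝ) (hδ₁ : δ₁ ∈ Set.Ioo (0 : ℝ) 1) (hδ₂ : δ₂ ∈ Set.Ioo (0 : ℝ) 1)
    (hδ : δ₁ + δ₂ ≤ 1)
    (Z : Ω → B) (hZ : ∀ ω, Z ω = (k : ℝ)⁻¹ • ∑ m ∈ Finset.range k, X (m + 1) ω)
    (r₂ : ℝ) (hr₂ : r₂ = 2 * β * v ^ (1 / p) * δ₂ ^ (-(1 / p)) * (k : ℝ) ^ (-((p - 1) / p)))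
    (lam : ℝ)
    (hlam : lam = (β * Real.log (2 / δ₁) /
      (((N : ℝ) - k) * (β * frakC p (1 / β) + Kp p * 2 ^ (p - 1)) * (v + r₂ ^ p))) ^ (1 / p)) :
    ENNReal.ofReal (1 - δ₁ - δ₂) ≤
      P {ω |
        ‖((N : ℝ) - k)⁻¹ • (∑ m ∈ Finset.Ioc k N,
            (truncB (lam • (X m ω - Z ω)) • (X m ω - Z ω) + Z ω)) - μ‖ ≤
          2 * ((β * frakC p (1 / β) + Kp p * 2 ^ (p - 1)) *
              (v + 2 ^ p * β ^ p * v / (δ₂ * (k : ℝ) ^ (p - 1)))) ^ (1 / p) *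
            (β * Real.log (2 / δ₁) / ((N : ℝ) - k)) ^ ((p - 1) / p)} :=
  stmt14_general β hβ hsmooth ℱ X μ p v hp1 hp2 hv hadapted hmom hcondmean hcondmom k N hk hkN
    δ₁ δ₂ hδ₁ hδ₂.1 Z hZ r₂ hr₂ lam hlam
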